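/- Trace theorem: there is a constant C > 0, depending only on n, d, and C₀, such that for every u ∈ W the following hold. For σ-almost every x ∈ Γ the limit Tu(x) := lim_{ρ→0} ⨍_{B(x,ρ)} u(y) dy exists; moreover, for σ-almost every x ∈ Γ, lim_{ρ→0} ⨍_{B(x,ρ)} |u(y) − Tu(x)| dy = 0; and the trace satisfies ∫_Γ ∫_Γ |Tu(x) − Tu(y)|² |x−y|^{−d−1} dσ(x) dσ(y) ≤ C ∫_Ω |∇u|² dm. -/

import Mathlib

open MeasureTheory Metric Set Filter
open scoped ENNReal NNReal Topology

noncomputable section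

/-- Euclidean space `ℝⁿ`. -/
abbrev Euc (n : ℕ) := EuclideanSpace ℝ (Fin n)

/-- `Γ ⊆ ℝⁿ` is `d`-Ahlfors regular with constant `C₀`. -/
def AhlforsRegular (n : ℕ) (d C₀ : ℝ) (Γ : Set (Euc n)) : Prop :=
  ∀ x ∈ Γ, ∀ r : ℝ, 0 < r →
    ENNReal.ofReal (C₀⁻¹ * r ^ d) ≤ μH[d] (Γ ∩ ball x r) ∧
      μH[d] (Γ ∩ ball x r) ≤ ENNReal.ofReal (C₀ * r ^ d)

/-- The weight `w(x) = dist(x, Γ) ^ (d + 1 - n)`. -/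
def weightW (n : ℕ) (d : ℝ) (Γ : Set (Euc n)) (x : Euc n) : ℝ :=
  infDist x Γ ^ (d + 1 - (n : ℝ))

/-- The measure `m` with density `w` with respect to Lebesgue measure. -/
def measW (n : ℕ) (d : ℝ) (Γ : Set (Euc n)) : Measure (Euc n) :=
  volume.withDensity fun x => ENNReal.ofReal (weightW n d Γ x)

/-- `v` is a distributional gradient of `u` on the open set `E`: for every smooth
compactly supported test function `φ` with support in `E`, `∫_E u ∇φ = -∫_E φ v`. -/
def IsDistribGradOn {n : ℕ} (u : Euc n → ℝ) (v : Euc n → Euc n) (E : Set (Euc n)) : Prop :=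
  ∀ φ : Euc n → ℝ, ContDiff ℝ (⊤ : ℕ∞) φ → HasCompactSupport φ → tsupport φ ⊆ E →
    ∫ x in E, u x • gradient φ x = -∫ x in E, φ x • v x

/-- The averages of `u` over small balls centered at `x` converge to `t`. -/
def HasTraceAt {n : ℕ} (u : Euc n → ℝ) (x : Euc n) (t : ℝ) : Prop :=
  Tendsto (fun ρ : ℝ => ⨍ y in ball x ρ, u y) (𝓝[>] (0 : ℝ)) (𝓝 t)

/-- `u` belongs to the weighted Sobolev space `W = Ẇ^{1,2}_w(Ω)`, `Ω = Γᶜ`, with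
distributional gradient `v` on `Ω` lying in `L²(Ω, m)`. -/
structure MemW (n : ℕ) (d : ℝ) (Γ : Set (Euc n)) (u : Euc n → ℝ) (v : Euc n → Euc n) :
    Prop where
  locInt : LocallyIntegrableOn u Γᶜ volume
  gradLocInt : LocallyIntegrableOn v Γᶜ volume
  isGrad : IsDistribGradOn u v Γᶜ
  l2 : ∫⁻ x in Γᶜ, ENNReal.ofReal (‖v x‖ ^ 2) ∂(measW n d Γ) < ⊤

/-- `u` belongs to the local space `W_r(E)`: `u ∈ L¹_loc(E)` and `φ u` (extended by `0`)
belongs to `W` for every smooth compactly supported `φ` with support in `E`. -/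
def MemWrOn (n : ℕ) (d : ℝ) (Γ : Set (Euc n)) (E : Set (Euc n)) (u : Euc n → ℝ) : Prop :=
  LocallyIntegrableOn u E volume ∧
    ∀ φ : Euc n → ℝ, ContDiff ℝ (⊤ : ℕ∞) φ → HasCompactSupport φ → tsupport φ ⊆ E →
      ∃ vφ : Euc n → Euc n, MemW n d Γ (fun x => φ x * u x) vφ

/-- Degenerate ellipticity and boundedness conditions for the matrix `A`. -/
def EllipticOn (n : ℕ) (d : ℝ) (Γ : Set (Euc n)) (A : Euc n → Euc n →L[ℝ] Euc n)
    (C₁ : ℝ) : Prop :=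
  ∀ x, x ∉ Γ →
    (∀ ξ ζ : Euc n, |∑ i, A x ξ i * ζ i| ≤ C₁ * weightW n d Γ x * ‖ξ‖ * ‖ζ‖) ∧
      ∀ ξ : Euc n, C₁⁻¹ * weightW n d Γ x * ‖ξ‖ ^ 2 ≤ ∑ i, A x ξ i * ξ i

/-- `u`, with gradient `v`, is a weak subsolution of `- div A ∇u = 0` on `U ⊆ Ω = Γᶜ`. -/
def SubsolOn {n : ℕ} (Γ : Set (Euc n)) (A : Euc n → Euc n →L[ℝ] Euc n)
    (v : Euc n → Euc n) (U : Set (Euc n)) : Prop :=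
  ∀ φ : Euc n → ℝ, ContDiff ℝ (⊤ : ℕ∞) φ → HasCompactSupport φ → tsupport φ ⊆ U →
    (∀ x, 0 ≤ φ x) → ∫ x in Γᶜ, ∑ i, A x (v x) i * gradient φ x i ≤ 0

/-- `u`, with gradient `v`, is a weak supersolution of `- div A ∇u = 0` on `U ⊆ Ω = Γᶜ`. -/
def SupersolOn {n : ℕ} (Γ : Set (Euc n)) (A : Euc n → Euc n →L[ℝ] Euc n)
    (v : Euc n → Euc n) (U : Set (Euc n)) : Prop :=
  ∀ φ : Euc n → ℝ, ContDiff ℝ (⊤ : ℕ∞) φ → HasCompactSupport φ → tsupport φ ⊆ U →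
    (∀ x, 0 ≤ φ x) → 0 ≤ ∫ x in Γᶜ, ∑ i, A x (v x) i * gradient φ x i

/-- `u`, with gradient `v`, is a weak solution of `- div A ∇u = 0` on `U ⊆ Ω = Γᶜ`. -/
def SolOn {n : ℕ} (Γ : Set (Euc n)) (A : Euc n → Euc n →L[ℝ] Euc n)
    (v : Euc n → Euc n) (U : Set (Euc n)) : Prop :=
  ∀ φ : Euc n → ℝ, ContDiff ℝ (⊤ : ℕ∞) φ → HasCompactSupport φ → tsupport φ ⊆ U →
    ∫ x in Γᶜ, ∑ i, A x (v x) i * gradient φ x i = 0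


theorem tail_int {n : ℕ} (σ : Measure (Euc n)) {A d a : ℝ} (hA : 0 ≤ A) (had : d < a)
    (hσ : ∀ z r, 0 < r → σ (ball z r) ≤ ENNReal.ofReal (A * r ^ d)) (ha : 0 < a)
    (z : Euc n) {s : ℝ} (hs : 0 < s) :
    ∫⁻ x in {x | s ≤ dist x z}, ENNReal.ofReal (dist x z ^ (-a)) ∂σ ≤
      ENNReal.ofReal (A * 2 ^ d / (1 - 2 ^ (d - a)) * s ^ (d - a)) := by
  have hq1 : (2:ℝ) ^ (d - a) < 1 := Real.rpow_lt_one_of_one_lt_of_neg (by norm_num) (by linarith)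
  have hq0 : (0:ℝ) ≤ 2 ^ (d - a) := by positivity
  have hsub : {x : Euc n | s ≤ dist x z} ⊆
      ⋃ j : ℕ, ({x | (2:ℝ) ^ j * s ≤ dist x z} ∩ ball z (2 ^ (j + 1) * s)) := by
    intro x hx
    simp only [mem_setOf_eq] at hx
    obtain ⟨j, h1, h2⟩ := exists_nat_pow_near (x := dist x z / s) (y := (2:ℝ))
      ((one_le_div hs).2 hx) (by norm_num)
    refine mem_iUnion.2 ⟨j, ?_, ?_⟩
    · exact (le_div_iff₀ hs).1 h1
    · exact (div_lt_iff₀ hs).1 h2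
  have hterm : ∀ j : ℕ, ∫⁻ x in ({x | (2:ℝ) ^ j * s ≤ dist x z} ∩ ball z (2 ^ (j + 1) * s)),
      ENNReal.ofReal (dist x z ^ (-a)) ∂σ ≤
      ENNReal.ofReal (A * 2 ^ d * s ^ (d - a) * (2 ^ (d - a)) ^ j) := by
    intro j
    have hp : 0 < (2:ℝ) ^ j * s := by positivity
    calc _ ≤ ∫⁻ x in ({x | (2:ℝ) ^ j * s ≤ dist x z} ∩ ball z (2 ^ (j + 1) * s)),
          ENNReal.ofReal (((2:ℝ) ^ j * s) ^ (-a)) ∂σ := by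
            apply setLIntegral_mono measurable_const
            intro x hx
            apply ENNReal.ofReal_le_ofReal
            exact Real.rpow_le_rpow_of_nonpos hp hx.1 (by linarith)
      _ = ENNReal.ofReal (((2:ℝ) ^ j * s) ^ (-a)) *
            σ ({x | (2:ℝ) ^ j * s ≤ dist x z} ∩ ball z (2 ^ (j + 1) * s)) := by
            rw [setLIntegral_const]
      _ ≤ ENNReal.ofReal (((2:ℝ) ^ j * s) ^ (-a)) * ENNReal.ofReal (A * (2 ^ (j + 1) * s) ^ d) := by
            gcongr
            exact (measure_mono inter_subset_right).trans (hσ z _ (by positivity))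
      _ = _ := by
            rw [← ENNReal.ofReal_mul (by positivity)]
            congr 1
            have e1 : (2:ℝ) ^ (j + 1) * s = 2 * (2 ^ j * s) := by ring
            rw [e1, Real.mul_rpow (by norm_num) hp.le, ← Real.rpow_natCast (2 ^ (d - a)) j,
              ← Real.rpow_mul (by norm_num)]
            have e2 : s ^ (d - a) * (2:ℝ) ^ ((d - a) * j) = (2 ^ j * s) ^ (d - a) := by
              rw [Real.mul_rpow (by positivity) hs.le, ← Real.rpow_natCast 2 j,
                ← Real.rpow_mul (by norm_num)]
              ring_nf
            rw [mul_assoc (A * 2 ^ d), e2, sub_eq_add_neg, Real.rpow_add hp]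
            ring
  calc _ ≤ ∫⁻ x in ⋃ j : ℕ, ({x | (2:ℝ) ^ j * s ≤ dist x z} ∩ ball z (2 ^ (j + 1) * s)),
          ENNReal.ofReal (dist x z ^ (-a)) ∂σ := lintegral_mono_set hsub
    _ ≤ ∑' j : ℕ, ∫⁻ x in ({x | (2:ℝ) ^ j * s ≤ dist x z} ∩ ball z (2 ^ (j + 1) * s)),
          ENNReal.ofReal (dist x z ^ (-a)) ∂σ := lintegral_iUnion_le _ _
    _ ≤ ∑' j : ℕ, ENNReal.ofReal (A * 2 ^ d * s ^ (d - a) * (2 ^ (d - a)) ^ j) :=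
          ENNReal.tsum_le_tsum hterm
    _ = ENNReal.ofReal (∑' j : ℕ, (A * 2 ^ d * s ^ (d - a) * (2 ^ (d - a)) ^ j)) := by
          rw [ENNReal.ofReal_tsum_of_nonneg]
          · intro j; positivity
          · exact (summable_geometric_of_lt_one hq0 hq1).mul_left _
    _ = _ := by
          rw [tsum_mul_left, tsum_geometric_of_lt_one hq0 hq1]
          congr 1
          field_simp

/-- upper regularity at all centers -/
theorem upper_reg {n : ℕ} {d C₀ : ℝ} {Γ : Set (Euc n)} (hC₀ : 0 ≤ C₀)
    (hΓ : AhlforsRegular n d C₀ Γ) (z : Euc n) (r : ℝ) (hr : 0 < r) :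
    (μH[d].restrict Γ) (ball z r) ≤ ENNReal.ofReal (C₀ * 2 ^ d * r ^ d) := by
  rw [Measure.restrict_apply measurableSet_ball]
  by_cases h : (ball z r ∩ Γ).Nonempty
  · obtain ⟨x, hx, hxΓ⟩ := h
    have := (hΓ x hxΓ (2 * r) (by positivity)).2
    rw [Real.mul_rpow (by norm_num) hr.le, ← mul_assoc] at this
    refine le_trans (measure_mono ?_) this
    rintro y ⟨hy, hyΓ⟩
    refine ⟨hyΓ, ?_⟩
    rw [mem_ball] at *
    linarith [dist_triangle_right y x z]
  · rw [not_nonempty_iff_eq_empty.1 h]; simp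

theorem sigma_locfin {n : ℕ} {d C₀ : ℝ} {Γ : Set (Euc n)} (hC₀ : 0 ≤ C₀)
    (hΓ : AhlforsRegular n d C₀ Γ) : IsLocallyFiniteMeasure (μH[d].restrict Γ) := by
  constructor
  intro x
  exact ⟨ball x 1, ball_mem_nhds _ one_pos,
    (upper_reg hC₀ hΓ x 1 one_pos).trans_lt ENNReal.ofReal_lt_top⟩

theorem nbhd_vol {n : ℕ} {d C₀ : ℝ} {Γ : Set (Euc n)} (hC₀ : 1 ≤ C₀) (hne : Γ.Nonempty)
    (hΓ : AhlforsRegular n d C₀ Γ) (R ε : ℝ) (hε : 0 < ε) (hε1 : ε ≤ 1) :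
    ENNReal.ofReal (C₀⁻¹ * ε ^ d) * volume ({y : Euc n | infDist y Γ < ε} ∩ ball 0 R) ≤
      (μH[d].restrict Γ) (ball (0 : Euc n) (R + 2)) *
        (ENNReal.ofReal ((2 * ε) ^ n) * volume (ball (0 : Euc n) 1)) := by
  set σ := (μH[d] : Measure (Euc n)).restrict Γ with hσdef
  have : IsLocallyFiniteMeasure σ := sigma_locfin (by linarith) hΓ
  set T : Set (Euc n × Euc n) := {p | dist p.1 p.2 < 2 * ε} ∩ Prod.snd ⁻¹' ball 0 (R + 2) with hT
  have hmeas : MeasurableSet T := by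
    refine MeasurableSet.inter ?_ (measurable_snd measurableSet_ball)
    exact measurableSet_lt (f := fun p : Euc n × Euc n => dist p.1 p.2) (g := fun _ => 2 * ε)
      (by fun_prop) (by fun_prop)
  have hSm : MeasurableSet ({y : Euc n | infDist y Γ < ε} ∩ ball 0 R) :=
    (measurableSet_lt (by fun_prop) (by fun_prop)).inter measurableSet_ball
  calc _ = ∫⁻ y in ({y : Euc n | infDist y Γ < ε} ∩ ball 0 R), ENNReal.ofReal (C₀⁻¹ * ε ^ d) := by
        rw [setLIntegral_const]
    _ ≤ ∫⁻ y in ({y : Euc n | infDist y Γ < ε} ∩ ball 0 R),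
          σ (Prod.mk y ⁻¹' T) := by
        refine setLIntegral_mono' hSm ?_
        rintro y ⟨hy, hyR⟩
        obtain ⟨x, hxΓ, hx⟩ := (infDist_lt_iff hne).1 hy
        refine (hΓ x hxΓ ε hε).1.trans ?_
        rw [hσdef, Measure.restrict_apply]
        · apply measure_mono
          rintro w ⟨hw, hwx⟩
          simp only [mem_ball, dist_zero_right] at hwx hyR
          have h1 : dist y w < 2 * ε := by linarith [dist_triangle_right y w x]
          refine ⟨⟨h1, ?_⟩, hw⟩
          rw [mem_preimage, mem_ball, dist_zero_right]
          have := norm_sub_norm_le w y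
          rw [← dist_eq_norm, dist_comm] at this
          linarith
        · exact measurable_prodMk_left hmeas
    _ ≤ ∫⁻ y, σ (Prod.mk y ⁻¹' T) := setLIntegral_le_lintegral _ _
    _ = ((volume : Measure (Euc n)).prod σ) T := by
        rw [Measure.prod_apply hmeas]
    _ = ∫⁻ x, volume ((fun y => (y, x)) ⁻¹' T) ∂σ := by
        rw [Measure.prod_apply_symm hmeas]
    _ ≤ ∫⁻ x in ball (0 : Euc n) (R + 2), ENNReal.ofReal ((2 * ε) ^ n) * volume (ball (0 : Euc n) 1) ∂σ := by
        rw [← lintegral_indicator measurableSet_ball]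
        apply lintegral_mono
        intro x
        dsimp only
        by_cases hx : x ∈ ball (0 : Euc n) (R + 2)
        · simp only [hx, indicator_of_mem]
          refine (measure_mono (show _ ⊆ ball x (2 * ε) from fun y hy => hy.1)).trans ?_
          have := Measure.addHaar_ball_of_pos (volume : Measure (Euc n)) x (r := 2 * ε) (by positivity)
          rw [finrank_euclideanSpace_fin] at this
          exact this.le
        · have : (fun y => (y, x)) ⁻¹' T = ∅ := by
            ext y
            simp only [mem_preimage, hT, mem_inter_iff, hx, and_false, mem_empty_iff_false]
          rw [this]; simp
    _ = _ := by rw [setLIntegral_const, mul_comm]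

theorem hit_null {n : ℕ} {d C₀ : ℝ} {Γ : Set (Euc n)} (hC₀ : 1 ≤ C₀) (hne : Γ.Nonempty)
    (hdn : d < (n : ℝ) - 1)
    (hΓ : AhlforsRegular n d C₀ Γ) (h : Euc n) :
    ∀ᵐ y : Euc n, ∀ t ∈ Icc (0:ℝ) 1, y + t • h ∉ Γ := by
  suffices H : ∀ k : ℕ, volume ({y : Euc n | ∃ t ∈ Icc (0:ℝ) 1, y + t • h ∈ Γ} ∩ ball 0 k) = 0 by
    have : volume {y : Euc n | ∃ t ∈ Icc (0:ℝ) 1, y + t • h ∈ Γ} = 0 := by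
      rw [← inter_univ {y : Euc n | ∃ t ∈ Icc (0:ℝ) 1, y + t • h ∈ Γ}, ← iUnion_ball_nat 0,
        inter_iUnion]
      exact measure_iUnion_null H
    rw [ae_iff]
    convert this using 3
    push Not
    rfl
  intro R
  set σ := (μH[d] : Measure (Euc n)).restrict Γ with hσdef
  set c : ℝ := ‖h‖ + 1 with hc
  have hc0 : 0 < c := by positivity
  set S := {y : Euc n | ∃ t ∈ Icc (0:ℝ) 1, y + t • h ∈ Γ} ∩ ball 0 R with hS
  set R' : ℝ := R + 2 * ‖h‖ with hR'
  have hσfin : σ (ball (0 : Euc n) (R' + 2)) < ⊤ :=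
    (upper_reg (by linarith) hΓ 0 _ (by positivity)).trans_lt ENNReal.ofReal_lt_top
  -- first estimate
  have est1 : ∀ ε : ℝ, 0 < ε → ε ≤ 1 → ENNReal.ofReal ε * volume S ≤
      3 * volume ({y : Euc n | infDist y Γ < ε * c} ∩ ball 0 R') := by
    intro ε hε hε1
    set N := {y : Euc n | infDist y Γ < ε * c} with hN
    have hNm : MeasurableSet N := measurableSet_lt (by fun_prop) (by fun_prop)
    set T : Set (Euc n × ℝ) := (fun p : Euc n × ℝ => p.1 + p.2 • h) ⁻¹' (N ∩ ball 0 R') with hT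
    have hTm : MeasurableSet T := by
      have hf : Measurable (fun p : Euc n × ℝ => p.1 + p.2 • h) := by fun_prop
      exact hf (hNm.inter measurableSet_ball)
    set μ1 : Measure ℝ := volume.restrict (Icc (-1) 2)
    have key : S ⊆ {y | ENNReal.ofReal ε ≤ μ1 (Prod.mk y ⁻¹' T)} := by
      rintro y ⟨⟨t0, ht0, hy⟩, hyR⟩
      show ENNReal.ofReal ε ≤ μ1 (Prod.mk y ⁻¹' T)
      have : Ico t0 (t0 + ε) ⊆ (Prod.mk y ⁻¹' T) ∩ Icc (-1) 2 := by
        rintro t ⟨ht, ht'⟩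
        refine ⟨⟨?_, ?_⟩, by linarith [ht0.1], by linarith [ht0.2]⟩
        · show infDist _ _ < _
          refine (infDist_le_dist_of_mem hy).trans_lt ?_
          rw [dist_eq_norm, add_sub_add_left_eq_sub, ← sub_smul, norm_smul, Real.norm_eq_abs,
            abs_of_nonneg (by linarith)]
          have : (t - t0) * ‖h‖ ≤ ε * ‖h‖ := by gcongr; linarith
          rw [hc]; nlinarith
        · rw [mem_ball, dist_zero_right] at *
          refine (norm_add_le _ _).trans_lt ?_
          rw [norm_smul, Real.norm_eq_abs, abs_of_nonneg (by linarith [ht0.1])]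
          have : t * ‖h‖ ≤ 2 * ‖h‖ := by gcongr; linarith [ht0.2]
          linarith
      have hm : MeasurableSet (Prod.mk y ⁻¹' T) :=
        measurable_prodMk_left hTm
      rw [Measure.restrict_apply hm]
      refine le_trans ?_ (measure_mono this)
      rw [Real.volume_Ico]; simp
    calc ENNReal.ofReal ε * volume S ≤ ENNReal.ofReal ε *
          volume {y | ENNReal.ofReal ε ≤ μ1 (Prod.mk y ⁻¹' T)} := by gcongr
      _ ≤ ∫⁻ y, μ1 (Prod.mk y ⁻¹' T) := by
          apply mul_meas_ge_le_lintegral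
          exact measurable_measure_prodMk_left hTm
      _ = ((volume : Measure (Euc n)).prod μ1) T := by
          rw [Measure.prod_apply hTm]
      _ = ∫⁻ t, volume ((fun y => y + t • h) ⁻¹' (N ∩ ball 0 R')) ∂μ1 := by
          rw [Measure.prod_apply_symm hTm]; rfl
      _ = ∫⁻ t, volume (N ∩ ball 0 R') ∂μ1 := by
          simp_rw [measure_preimage_add_right]
      _ = 3 * volume (N ∩ ball 0 R') := by
          rw [lintegral_const, mul_comm]
          congr 1
          rw [Measure.restrict_apply MeasurableSet.univ, univ_inter, Real.volume_Icc]
          norm_num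
  have hcn : 0 < (n:ℝ) - 1 - d := by linarith
  -- combine
  set ω := volume (ball (0 : Euc n) 1) with hω
  have hωfin : ω < ⊤ := measure_ball_lt_top
  have est2 : ∀ ε : ℝ, 0 < ε → ε * c ≤ 1 → volume S ≤
      ENNReal.ofReal (ε ^ ((n:ℝ) - 1 - d)) *
        (ENNReal.ofReal (C₀ * c ^ ((n:ℝ) - d) * 2 ^ n) * (3 * (σ (ball (0 : Euc n) (R' + 2)) * ω))) := by
    intro ε hε hε1
    have e0 : ε ≤ 1 := by nlinarith [norm_nonneg h]
    have h1 := est1 ε hε e0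
    have h2 := nbhd_vol hC₀ hne hΓ R' (ε * c) (by positivity) hε1
    rw [← hσdef] at h2
    have h3 : ENNReal.ofReal ε * ENNReal.ofReal (C₀⁻¹ * (ε * c) ^ d) * volume S ≤
        3 * (σ (ball (0 : Euc n) (R' + 2)) * (ENNReal.ofReal ((2 * (ε * c)) ^ n) * ω)) := by
      calc _ = ENNReal.ofReal (C₀⁻¹ * (ε * c) ^ d) * (ENNReal.ofReal ε * volume S) := by ring
        _ ≤ ENNReal.ofReal (C₀⁻¹ * (ε * c) ^ d) * (3 * volume ({y : Euc n | infDist y Γ < ε * c} ∩ ball 0 R')) := by gcongr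
        _ = 3 * (ENNReal.ofReal (C₀⁻¹ * (ε * c) ^ d) * volume ({y : Euc n | infDist y Γ < ε * c} ∩ ball 0 R')) := by ring
        _ ≤ _ := by gcongr
    rw [← ENNReal.ofReal_mul hε.le] at h3
    have hpos : 0 < ε * (C₀⁻¹ * (ε * c) ^ d) := by positivity
    have h4 : volume S = ENNReal.ofReal ((ε * (C₀⁻¹ * (ε * c) ^ d))⁻¹) *
        (ENNReal.ofReal (ε * (C₀⁻¹ * (ε * c) ^ d)) * volume S) := by
      rw [← mul_assoc, ← ENNReal.ofReal_mul (by positivity), inv_mul_cancel₀ hpos.ne']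
      simp
    rw [h4]
    calc _ ≤ ENNReal.ofReal ((ε * (C₀⁻¹ * (ε * c) ^ d))⁻¹) * (3 * (σ (ball (0 : Euc n) (R' + 2)) * (ENNReal.ofReal ((2 * (ε * c)) ^ n) * ω))) := by gcongr
      _ = (ENNReal.ofReal ((ε * (C₀⁻¹ * (ε * c) ^ d))⁻¹) * ENNReal.ofReal ((2 * (ε * c)) ^ n)) * (3 * (σ (ball (0 : Euc n) (R' + 2)) * ω)) := by ring
      _ = _ := by
        rw [← mul_assoc (ENNReal.ofReal _) (ENNReal.ofReal _), ← ENNReal.ofReal_mul (by positivity), ← ENNReal.ofReal_mul (by positivity)]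
        congr 2
        rw [Real.rpow_sub hε, Real.rpow_sub hε, Real.rpow_sub hc0, Real.mul_rpow hε.le hc0.le,
          Real.rpow_natCast, Real.rpow_natCast, Real.rpow_one, mul_pow, mul_pow]
        field_simp
  set K := (ENNReal.ofReal (C₀ * c ^ ((n:ℝ) - d) * 2 ^ n) * (3 * (σ (ball (0 : Euc n) (R' + 2)) * ω))) with hK
  have hKfin : K ≠ ⊤ := by
    rw [hK]
    exact ENNReal.mul_ne_top ENNReal.ofReal_ne_top (ENNReal.mul_ne_top (by norm_num)
      (ENNReal.mul_ne_top hσfin.ne hωfin.ne))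
  have hlim : Tendsto (fun ε : ℝ => ENNReal.ofReal (ε ^ ((n:ℝ) - 1 - d)) * K) (𝓝[>] 0) (𝓝 0) := by
    have : Tendsto (fun ε : ℝ => ENNReal.ofReal (ε ^ ((n:ℝ) - 1 - d)) * K) (𝓝 0) (𝓝 (ENNReal.ofReal (0 ^ ((n:ℝ) - 1 - d)) * K)) := by
      refine ENNReal.Tendsto.mul_const ?_ (Or.inr hKfin)
      refine ENNReal.tendsto_ofReal ?_
      exact (Real.continuous_rpow_const hcn.le).tendsto 0
    rw [Real.zero_rpow hcn.ne'] at this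
    simp only [ENNReal.ofReal_zero, zero_mul] at this
    exact this.mono_left nhdsWithin_le_nhds
  refine le_antisymm (ge_of_tendsto hlim ?_) bot_le
  have : Ioo (0:ℝ) (1 / c) ∈ 𝓝[>] (0:ℝ) := Ioo_mem_nhdsGT (by positivity)
  filter_upwards [this] with ε hε
  exact est2 ε hε.1 ((lt_div_iff₀ hc0).1 hε.2).le

open scoped Convolution in
theorem moll_deriv {n : ℕ} {Γ : Set (Euc n)} {u : Euc n → ℝ} {v : Euc n → Euc n}
    (hcl : IsClosed Γ)
    (hg : IsDistribGradOn u v Γᶜ) (hu : LocallyIntegrable u volume) (φ : ContDiffBump (0 : Euc n))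
    (w : Euc n) (hw : closedBall w φ.rOut ⊆ Γᶜ) (h : Euc n) :
    ‖fderiv ℝ (φ.normed volume ⋆[ContinuousLinearMap.lsmul ℝ ℝ, volume] u) w h‖ₑ ≤
      ‖h‖ₑ * ∫⁻ y in Γᶜ, ENNReal.ofReal (φ.normed volume (w - y)) * ‖v y‖ₑ := by
  set ρ := φ.normed (volume : Measure (Euc n)) with hρ
  have hρc : HasCompactSupport ρ := φ.hasCompactSupport_normed
  have hρs : ContDiff ℝ (⊤ : ℕ∞) ρ := φ.contDiff_normed
  have hρ1 : ContDiff ℝ 1 ρ := φ.contDiff_normed (n := 1)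
  have h1 := HasCompactSupport.hasFDerivAt_convolution_left
    (ContinuousLinearMap.lsmul ℝ ℝ) (μ := (volume : Measure (Euc n))) hρc hρ1 hu w
  rw [h1.fderiv, convolution_eq_swap]
  set ψ : Euc n → ℝ := fun y => ρ (w - y) with hψ
  have hψs : ContDiff ℝ (⊤ : ℕ∞) ψ := hρs.comp (contDiff_const.sub contDiff_id)
  have hψt : tsupport ψ ⊆ closedBall w φ.rOut := by
    apply closure_minimal _ isClosed_closedBall
    intro y hy
    have : w - y ∈ tsupport ρ := subset_tsupport _ hy
    rw [hρ, φ.tsupport_normed_eq] at this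
    rw [mem_closedBall, dist_zero_right] at this
    rwa [mem_closedBall, dist_comm, dist_eq_norm]
  have hψc : HasCompactSupport ψ :=
    (isCompact_closedBall w φ.rOut).of_isClosed_subset (isClosed_tsupport _) hψt
  have hfd : ∀ y, fderiv ℝ ψ y = -fderiv ℝ ρ (w - y) := by
    intro y
    have hd : HasFDerivAt ρ (fderiv ℝ ρ (w - y)) (w - y) :=
      (hρ1.differentiable (by norm_num) _).hasFDerivAt
    have h2 : HasFDerivAt (fun y => w - y) (-(ContinuousLinearMap.id ℝ (Euc n))) y :=
      (hasFDerivAt_id y).const_sub w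
    have := (hd.comp y h2).fderiv
    rw [show ψ = ρ ∘ (fun y => w - y) from rfl, this]
    ext z; simp
  have e1 : (∫ t, (ContinuousLinearMap.precompL (Euc n) (ContinuousLinearMap.lsmul ℝ ℝ)
      (fderiv ℝ ρ (w - t))) (u t)) = ∫ t, u t • (-fderiv ℝ ψ t) := by
    congr 1; ext t z
    rw [ContinuousLinearMap.precompL_apply, hfd]
    simp [mul_comm]
  rw [e1]
  have hcont : Continuous (fderiv ℝ ψ) := hψs.continuous_fderiv (by simp)
  have hint : Integrable (fun t => u t • (-fderiv ℝ ψ t)) volume :=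
    hu.integrable_smul_right_of_hasCompactSupport hcont.neg (hψc.fderiv ℝ).neg
  rw [ContinuousLinearMap.integral_apply hint]
  have hgc : Continuous (gradient ψ) := by
    unfold gradient
    exact (LinearIsometryEquiv.continuous _).comp hcont
  have hgs : HasCompactSupport (gradient ψ) := by
    unfold gradient
    exact (hψc.fderiv ℝ).comp_left (map_zero _)
  have hint2 : Integrable (fun t => u t • gradient ψ t) volume :=
    hu.integrable_smul_right_of_hasCompactSupport hgc hgs
  have e2 : ∫ t, (u t • (-fderiv ℝ ψ t)) h = - inner ℝ h (∫ t, u t • gradient ψ t) := by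
    rw [← integral_inner hint2, ← integral_neg]
    congr 1; ext t
    rw [inner_smul_right, real_inner_comm, inner_gradient_left]
    simp
  have e3 : ∫ t, u t • gradient ψ t = ∫ t in Γᶜ, u t • gradient ψ t := by
    rw [setIntegral_eq_integral_of_forall_compl_eq_zero]
    intro t ht
    have : fderiv ℝ ψ t = 0 := by
      by_contra hne
      exact ht (hw (hψt (support_fderiv_subset ℝ hne)))
    simp [gradient, this]
  rw [e2, e3, hg ψ hψs hψc (hψt.trans hw), enorm_neg]
  calc _ ≤ ‖h‖ₑ * ‖-∫ x in Γᶜ, ψ x • v x‖ₑ := by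
        rw [← ofReal_norm, ← ofReal_norm, ← ofReal_norm, ← ENNReal.ofReal_mul (norm_nonneg _)]
        exact ENNReal.ofReal_le_ofReal (norm_inner_le_norm _ _)
    _ ≤ _ := by
        gcongr
        rw [enorm_neg]
        refine (enorm_integral_le_lintegral_enorm _).trans ?_
        apply lintegral_mono
        intro y
        dsimp only
        rw [enorm_smul]
        gcongr
        rw [Real.enorm_eq_ofReal (φ.nonneg_normed _)]


theorem moll_int {n : ℕ} {F : Euc n → ℝ≥0∞} (hF : Measurable F) (φ : ContDiffBump (0 : Euc n))
    (c x : Euc n) (r : ℝ) :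
    ∫⁻ y in ball x r, ∫⁻ z, ENNReal.ofReal (φ.normed volume ((y + c) - z)) * F z ≤
      ∫⁻ y in ball x (r + ‖c‖ + φ.rOut), F y := by
  set ρ := φ.normed (volume : Measure (Euc n)) with hρ
  have hρm : Measurable ρ := (φ.contDiff_normed (n := 0)).continuous.measurable
  have e1 : ∀ y, ∫⁻ z, ENNReal.ofReal (ρ ((y + c) - z)) * F z =
      ∫⁻ s, ENNReal.ofReal (ρ s) * F (y + c - s) := by
    intro y
    rw [← lintegral_sub_left_eq_self _ (y + c)]
    simp
  simp_rw [e1]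
  rw [lintegral_lintegral_swap (by fun_prop)]
  have hρ1 : ∫⁻ s, ENNReal.ofReal (ρ s) = 1 := by
    rw [← ofReal_integral_eq_lintegral_ofReal φ.integrable_normed
      (Eventually.of_forall φ.nonneg_normed), φ.integral_normed, ENNReal.ofReal_one]
  calc _ ≤ ∫⁻ s, ENNReal.ofReal (ρ s) * ∫⁻ y in ball x (r + ‖c‖ + φ.rOut), F y := by
        apply lintegral_mono
        intro s
        dsimp only
        rw [lintegral_const_mul _ (by fun_prop)]
        by_cases hs : ρ s = 0
        · simp [hs]
        refine mul_le_mul_right ?_ _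
        have hs' : s ∈ Function.support ρ := hs
        rw [hρ, φ.support_normed_eq, mem_ball, dist_zero_right] at hs'
        rw [← lintegral_indicator measurableSet_ball, ← lintegral_indicator measurableSet_ball,
          ← lintegral_add_right_eq_self
            ((ball x (r + ‖c‖ + φ.rOut)).indicator F) (c - s)]
        apply lintegral_mono
        intro y
        dsimp only
        by_cases hy : y ∈ ball x r
        · have : y + (c - s) ∈ ball x (r + ‖c‖ + φ.rOut) := by
            rw [mem_ball, dist_eq_norm] at *
            calc ‖y + (c - s) - x‖ = ‖(y - x) + (c - s)‖ := by congr 1; abel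
              _ ≤ ‖y - x‖ + (‖c‖ + ‖s‖) := (norm_add_le _ _).trans (by gcongr; exact norm_sub_le _ _)
              _ < _ := by linarith
          rw [indicator_of_mem hy, indicator_of_mem this, add_sub_assoc]
        · rw [indicator_of_notMem hy]; exact bot_le
    _ = _ := by
        rw [lintegral_mul_const _ (by fun_prop), hρ1, one_mul]

open scoped Convolution in
theorem transl_est {n : ℕ} {d C₀ : ℝ} {Γ : Set (Euc n)} (hC₀ : 1 ≤ C₀) (hne : Γ.Nonempty)
    (hdn : d < (n : ℝ) - 1) (hcl : IsClosed Γ) (hΓ : AhlforsRegular n d C₀ Γ)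
    {u : Euc n → ℝ} {v : Euc n → Euc n}
    (hg : IsDistribGradOn u v Γᶜ) (hu : LocallyIntegrable u volume)
    {F : Euc n → ℝ≥0∞} (hF : Measurable F) (hFv : ∀ᵐ y ∂(volume.restrict Γᶜ), ‖v y‖ₑ = F y)
    (h x : Euc n) (r : ℝ) :
    ∫⁻ y in ball x r, ‖u (y + h) - u y‖ₑ ≤ ‖h‖ₑ * ∫⁻ y in ball x (r + 2 * ‖h‖), F y := by
  by_cases hh : h = 0
  · simp [hh]
  have hh0 : 0 < ‖h‖ := norm_pos_iff.2 hh
  set ε : ℕ → ℝ := fun k => ‖h‖ / (k + 1) with hε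
  have hε0 : ∀ k, 0 < ε k := fun k => by positivity
  have hεh : ∀ k, ε k ≤ ‖h‖ := fun k => div_le_self hh0.le (by linarith [k.cast_nonneg (α := ℝ)])
  have hεlim : Tendsto ε atTop (𝓝 0) := by
    have := (tendsto_one_div_add_atTop_nhds_zero_nat (𝕜 := ℝ)).const_mul ‖h‖
    simpa [hε, div_eq_mul_inv] using this
  set φ : ℕ → ContDiffBump (0 : Euc n) := fun k =>
    ⟨ε k / 4, ε k / 2, by have := hε0 k; positivity, by linarith [hε0 k]⟩ with hφ
  have hφo : ∀ k, (φ k).rOut = ε k / 2 := fun k => rfl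
  have hφi : ∀ k, (φ k).rIn = ε k / 4 := fun k => rfl
  clear_value φ
  set U : ℕ → Euc n → ℝ := fun k =>
    ((φ k).normed volume ⋆[ContinuousLinearMap.lsmul ℝ ℝ, volume] u) with hU
  have hUs : ∀ k, ContDiff ℝ 1 (U k) := fun k =>
    HasCompactSupport.contDiff_convolution_left (n := 1) _ (φ k).hasCompactSupport_normed
      (φ k).contDiff_normed hu
  have hUlim : ∀ᵐ y, Tendsto (fun k => U k y) atTop (𝓝 (u y)) := by
    apply ContDiffBump.ae_convolution_tendsto_right_of_locallyIntegrable (K := 2) _ _ hu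
    · simp_rw [hφo]; simpa using hεlim.div_const 2
    · refine Eventually.of_forall fun k => ?_
      rw [hφo, hφi]; linarith
  have hUlim2 : ∀ᵐ y, Tendsto (fun k => U k (y + h)) atTop (𝓝 (u (y + h))) :=
    (measurePreserving_add_right volume h).quasiMeasurePreserving.ae hUlim
  set A : ℕ → Set (Euc n) := fun k => {y | ∀ t ∈ Icc (0:ℝ) 1, ε k ≤ infDist (y + t • h) Γ} with hA
  have hAc : ∀ k, IsClosed (A k) := by
    intro k
    have : A k = ⋂ t ∈ Icc (0:ℝ) 1, {y | ε k ≤ infDist (y + t • h) Γ} := by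
      ext y; simp [hA]
    rw [this]
    refine isClosed_biInter fun t _ => isClosed_le continuous_const ?_
    exact (continuous_infDist_pt Γ).comp (continuous_id.add continuous_const)
  have hAev : ∀ᵐ y, ∀ᶠ k in atTop, y ∈ A k := by
    filter_upwards [hit_null hC₀ hne hdn hΓ h] with y hy
    have hc : Continuous fun t : ℝ => infDist (y + t • h) Γ :=
      (continuous_infDist_pt Γ).comp (by fun_prop)
    obtain ⟨t0, ht0, hmin⟩ := isCompact_Icc.exists_isMinOn (nonempty_Icc.2 (zero_le_one (α := ℝ)))
      hc.continuousOn
    have hpos : 0 < infDist (y + t0 • h) Γ := (hcl.notMem_iff_infDist_pos hne).1 (hy t0 ht0)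
    filter_upwards [hεlim.eventually_lt_const hpos] with k hk t ht
    exact hk.le.trans (hmin ht)
  -- pointwise bound
  have hpt : ∀ k, ∀ y ∈ A k, ‖U k (y + h) - U k y‖ₑ ≤ ‖h‖ₑ * ∫⁻ t in Ioc (0:ℝ) 1,
      ∫⁻ z, ENNReal.ofReal ((φ k).normed volume ((y + t • h) - z)) * F z := by
    intro k y hy
    have hder : ∀ t : ℝ, HasDerivAt (fun t : ℝ => U k (y + t • h))
        (fderiv ℝ (U k) (y + t • h) h) t := by
      intro t
      have h1 : HasFDerivAt (U k) (fderiv ℝ (U k) (y + t • h)) (y + t • h) :=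
        ((hUs k).differentiable (by norm_num) _).hasFDerivAt
      have h2 : HasDerivAt (fun t : ℝ => y + t • h) h t := by
        simpa using ((hasDerivAt_id t).smul_const h).const_add y
      exact h1.comp_hasDerivAt t h2
    have hcont : Continuous fun t : ℝ => fderiv ℝ (U k) (y + t • h) h := by
      have := (hUs k).continuous_fderiv (by norm_num)
      fun_prop
    have hftc := intervalIntegral.integral_eq_sub_of_hasDerivAt (a := 0) (b := 1)
      (fun t _ => hder t) (hcont.intervalIntegrable _ _)
    simp only [one_smul, zero_smul, add_zero] at hftc
    rw [← hftc, intervalIntegral.integral_of_le zero_le_one]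
    refine (enorm_integral_le_lintegral_enorm _).trans ?_
    rw [← lintegral_const_mul' _ _ (by simp)]
    apply setLIntegral_mono' measurableSet_Ioc
    intro t ht
    have htA := hy t ⟨ht.1.le, ht.2⟩
    refine (moll_deriv hcl hg hu (φ k) (y + t • h) ?_ h).trans ?_
    · intro z hz hzΓ
      rw [mem_closedBall, dist_comm] at hz
      have := infDist_le_dist_of_mem (x := y + t • h) hzΓ
      rw [hφo] at hz
      linarith [hε0 k]
    · refine mul_le_mul_right ?_ _
      calc ∫⁻ z in Γᶜ, ENNReal.ofReal ((φ k).normed volume ((y + t • h) - z)) * ‖v z‖ₑ = ∫⁻ z in Γᶜ, ENNReal.ofReal ((φ k).normed volume ((y + t • h) - z)) * F z := by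
            apply lintegral_congr_ae
            filter_upwards [hFv] with z hz
            rw [hz]
        _ ≤ _ := setLIntegral_le_lintegral _ _
  have hint : ∀ k, ∫⁻ y in ball x r, (A k).indicator (fun y => ‖U k (y + h) - U k y‖ₑ) y ≤
      ‖h‖ₑ * ∫⁻ y in ball x (r + 2 * ‖h‖), F y := by
    intro k
    have hρm : Measurable ((φ k).normed volume) := ((φ k).contDiff_normed (n := 0)).continuous.measurable
    have hm3 : Measurable fun p : (Euc n × ℝ) × Euc n =>
        ENNReal.ofReal ((φ k).normed volume ((p.1.1 + p.1.2 • h) - p.2)) * F p.2 := by fun_prop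
    have hm2 : Measurable fun p : Euc n × ℝ => ∫⁻ z, ENNReal.ofReal ((φ k).normed volume ((p.1 + p.2 • h) - z)) * F z :=
      hm3.lintegral_prod_right'
    calc _ ≤ ∫⁻ y in ball x r, ‖h‖ₑ * ∫⁻ t in Ioc (0:ℝ) 1,
          ∫⁻ z, ENNReal.ofReal ((φ k).normed volume ((y + t • h) - z)) * F z := by
          apply lintegral_mono
          intro y
          dsimp only
          by_cases hy : y ∈ A k
          · rw [indicator_of_mem hy]; exact hpt k y hy
          · rw [indicator_of_notMem hy]; exact bot_le
      _ = ‖h‖ₑ * ∫⁻ t in Ioc (0:ℝ) 1, ∫⁻ y in ball x r,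
          ∫⁻ z, ENNReal.ofReal ((φ k).normed volume ((y + t • h) - z)) * F z := by
          rw [lintegral_const_mul' _ _ (by simp), lintegral_lintegral_swap]
          exact hm2.aemeasurable
      _ ≤ ‖h‖ₑ * ∫⁻ t in Ioc (0:ℝ) 1, ∫⁻ y in ball x (r + 2 * ‖h‖), F y := by
          refine mul_le_mul_right ?_ _
          apply setLIntegral_mono' measurableSet_Ioc
          intro t ht
          refine (moll_int hF (φ k) (t • h) x r).trans (lintegral_mono_set (ball_subset_ball ?_))
          rw [norm_smul, Real.norm_eq_abs, abs_of_pos ht.1, hφo]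
          nlinarith [hεh k, hε0 k, ht.2]
      _ = _ := by simp
  calc _ ≤ ∫⁻ y in ball x r, liminf (fun k => (A k).indicator (fun y => ‖U k (y + h) - U k y‖ₑ) y) atTop := by
        apply lintegral_mono_ae
        apply ae_restrict_of_ae
        filter_upwards [hUlim, hUlim2, hAev] with y h1 h2 h3
        have h4 : Tendsto (fun k => (A k).indicator (fun y => ‖U k (y + h) - U k y‖ₑ) y) atTop
            (𝓝 ‖u (y + h) - u y‖ₑ) := by
          refine ((h2.sub h1).enorm).congr' ?_
          filter_upwards [h3] with k hk
          rw [indicator_of_mem hk]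
        exact h4.liminf_eq.ge
    _ ≤ liminf (fun k => ∫⁻ y in ball x r, (A k).indicator (fun y => ‖U k (y + h) - U k y‖ₑ) y) atTop := by
        apply lintegral_liminf_le
        intro k
        refine Measurable.indicator ?_ (hAc k).measurableSet
        have := (hUs k).continuous.measurable
        fun_prop
    _ ≤ _ := by
        refine (liminf_le_liminf (Eventually.of_forall hint)).trans ?_
        simp

/-- mean distance to a constant over a ball -/
def lav {n : ℕ} (u : Euc n → ℝ) (x : Euc n) (r t : ℝ) : ℝ≥0∞ :=
  (∫⁻ y in ball x r, ‖u y - t‖ₑ) / volume (ball x r)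

/-- mean oscillation over a ball -/
def dosc {n : ℕ} (u : Euc n → ℝ) (x : Euc n) (r : ℝ) : ℝ≥0∞ :=
  (∫⁻ y in ball x r, ∫⁻ z in ball x r, ‖u z - u y‖ₑ) / volume (ball x r) ^ 2

theorem vol_ball {n : ℕ} (x : Euc n) {r : ℝ} (hr : 0 < r) :
    volume (ball x r) = ENNReal.ofReal (r ^ n) * volume (ball (0 : Euc n) 1) := by
  have := Measure.addHaar_ball_of_pos (volume : Measure (Euc n)) x hr
  rwa [finrank_euclideanSpace_fin] at this

theorem cs_lintegral {α : Type*} [MeasurableSpace α] (μ : Measure α) {F : α → ℝ≥0∞}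
    (hF : AEMeasurable F μ) : (∫⁻ x, F x ∂μ) ^ 2 ≤ μ univ * ∫⁻ x, F x ^ 2 ∂μ := by
  have h := ENNReal.lintegral_mul_le_Lp_mul_Lq μ (p := 2) (q := 2)
    (Real.HolderConjugate.two_two) (f := fun _ => 1) (g := F) aemeasurable_const hF
  simp only [Pi.mul_apply, one_mul, ENNReal.one_rpow, lintegral_one] at h
  calc _ ≤ (μ univ ^ (1 / (2:ℝ)) * (∫⁻ x, F x ^ (2:ℝ) ∂μ) ^ (1 / (2:ℝ))) ^ 2 := by gcongr
    _ = _ := by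
      rw [mul_pow, ← ENNReal.rpow_natCast, ← ENNReal.rpow_natCast, ← ENNReal.rpow_mul,
        ← ENNReal.rpow_mul]
      norm_num

theorem poincare {n : ℕ} {u : Euc n → ℝ} (hum : Measurable u) {F : Euc n → ℝ≥0∞}
    (hT : ∀ h x r, ∫⁻ y in ball x r, ‖u (y + h) - u y‖ₑ ≤
      ‖h‖ₑ * ∫⁻ y in ball x (r + 2 * ‖h‖), F y)
    (x : Euc n) {r : ℝ} :
    ∫⁻ y in ball x r, ∫⁻ z in ball x r, ‖u z - u y‖ₑ ≤
      ENNReal.ofReal (2 * r) * volume (ball (0 : Euc n) (2 * r)) * ∫⁻ y in ball x (5 * r), F y := by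
  calc _ ≤ ∫⁻ y in ball x r, ∫⁻ h in ball (0 : Euc n) (2 * r), ‖u (y + h) - u y‖ₑ := by
        apply setLIntegral_mono' measurableSet_ball
        intro y hy
        rw [← lintegral_indicator measurableSet_ball, ← lintegral_indicator measurableSet_ball,
          ← lintegral_add_left_eq_self _ y]
        apply lintegral_mono
        intro h
        dsimp only
        by_cases hh : y + h ∈ ball x r
        · have : h ∈ ball (0 : Euc n) (2 * r) := by
            rw [mem_ball, dist_eq_norm] at *
            calc ‖h - 0‖ = ‖(y + h - x) - (y - x)‖ := by congr 1; abel
              _ ≤ _ := norm_sub_le _ _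
              _ < _ := by linarith
          rw [indicator_of_mem hh, indicator_of_mem this]
        · rw [indicator_of_notMem hh]; exact bot_le
    _ = ∫⁻ h in ball (0 : Euc n) (2 * r), ∫⁻ y in ball x r, ‖u (y + h) - u y‖ₑ := by
        rw [lintegral_lintegral_swap]
        fun_prop
    _ ≤ ∫⁻ h in ball (0 : Euc n) (2 * r), ENNReal.ofReal (2 * r) * ∫⁻ y in ball x (5 * r), F y := by
        apply setLIntegral_mono' measurableSet_ball
        intro h hh
        rw [mem_ball, dist_zero_right] at hh
        refine (hT h x r).trans (mul_le_mul' ?_ (lintegral_mono_set (ball_subset_ball (by linarith))))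
        rw [← ofReal_norm]
        exact ENNReal.ofReal_le_ofReal hh.le
    _ = _ := by rw [setLIntegral_const]; ring

theorem dosc_sq {n : ℕ} {u : Euc n → ℝ} (hum : Measurable u) {F : Euc n → ℝ≥0∞} (hF : Measurable F)
    (hT : ∀ h x r, ∫⁻ y in ball x r, ‖u (y + h) - u y‖ₑ ≤
      ‖h‖ₑ * ∫⁻ y in ball x (r + 2 * ‖h‖), F y)
    (x : Euc n) {r : ℝ} (hr : 0 < r) :
    dosc u x r ^ 2 ≤ (ENNReal.ofReal (4 * 20 ^ n) / volume (ball (0 : Euc n) 1)) *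
      (ENNReal.ofReal (r ^ (2 - (n:ℝ))) * ∫⁻ y in ball x (5 * r), F y ^ 2) := by
  set ω := volume (ball (0 : Euc n) 1) with hω
  have hω0 : ω ≠ 0 := (measure_ball_pos _ _ one_pos).ne'
  have hωt : ω ≠ ⊤ := measure_ball_lt_top.ne
  have hV := vol_ball x hr
  rw [← hω] at hV
  unfold dosc
  have h1 := poincare hum hT x (r := r)
  have h2 := cs_lintegral (volume.restrict (ball x (5 * r))) (F := F) hF.aemeasurable
  rw [Measure.restrict_apply MeasurableSet.univ, univ_inter, vol_ball x (by positivity), ← hω] at h2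
  rw [vol_ball 0 (by positivity), ← hω] at h1
  set N := ∫⁻ y in ball x (5 * r), F y ^ 2
  rw [div_eq_mul_inv, mul_pow, ← ENNReal.inv_pow, ← div_eq_mul_inv, hV]
  have hne0 : (ENNReal.ofReal (r ^ n) * ω) ≠ 0 := by
    refine mul_ne_zero ?_ hω0
    rw [Ne, ENNReal.ofReal_eq_zero, not_le]; positivity
  have hnet : (ENNReal.ofReal (r ^ n) * ω) ≠ ⊤ := ENNReal.mul_ne_top ENNReal.ofReal_ne_top hωt
  refine ENNReal.div_le_of_le_mul ?_
  calc _ ≤ (ENNReal.ofReal (2 * r) * (ENNReal.ofReal ((2 * r) ^ n) * ω) * ∫⁻ y in ball x (5 * r), F y) ^ 2 := by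
        gcongr
    _ = (ENNReal.ofReal (2 * r) * (ENNReal.ofReal ((2 * r) ^ n) * ω)) ^ 2 * (∫⁻ y in ball x (5 * r), F y) ^ 2 := by
        rw [mul_pow]
    _ ≤ (ENNReal.ofReal (2 * r) * (ENNReal.ofReal ((2 * r) ^ n) * ω)) ^ 2 * (ENNReal.ofReal ((5 * r) ^ n) * ω * N) := by
        gcongr
    _ = (ENNReal.ofReal (2 * r) * ENNReal.ofReal ((2 * r) ^ n)) ^ 2 * ENNReal.ofReal ((5 * r) ^ n) * ω ^ 3 * N := by ring
    _ = ENNReal.ofReal ((2 * r * (2 * r) ^ n) ^ 2 * (5 * r) ^ n) * ω ^ 3 * N := by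
        rw [← ENNReal.ofReal_mul (by positivity), ← ENNReal.ofReal_pow (by positivity), ← ENNReal.ofReal_mul (by positivity)]
    _ = ENNReal.ofReal ((4 * 20 ^ n) * r ^ (2 - (n:ℝ)) * ((r ^ n) ^ 2) ^ 2) * (ω⁻¹ * ω) * ω ^ 3 * N := by
        rw [ENNReal.inv_mul_cancel hω0 hωt, mul_one]
        congr 3
        rw [Real.rpow_sub hr, Real.rpow_natCast, mul_pow, mul_pow]
        norm_num
        field_simp
        rw [show (20:ℝ) ^ n = (2 ^ n) ^ 2 * 5 ^ n by rw [← pow_mul, mul_comm n 2, pow_mul, ← mul_pow]; norm_num]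
        ring
    _ = _ := by
        rw [ENNReal.ofReal_mul (by positivity), ENNReal.ofReal_mul (by positivity),
          ENNReal.ofReal_pow (by positivity), ENNReal.ofReal_pow (by positivity), div_eq_mul_inv]
        ring

theorem lav_mono {n : ℕ} (u : Euc n → ℝ) {x y : Euc n} {s r : ℝ} (hs : 0 < s)
    (hsub : ball y s ⊆ ball x r) (hr : r ≤ 2 * s) (hr0 : 0 < r) (t : ℝ) :
    lav u y s t ≤ 2 ^ n * lav u x r t := by
  unfold lav
  have hV : volume (ball x r) ≤ 2 ^ n * volume (ball y s) := by
    rw [vol_ball x hr0, vol_ball y hs, ← mul_assoc]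
    refine mul_le_mul' ?_ le_rfl
    rw [← ENNReal.ofReal_ofNat, ← ENNReal.ofReal_pow (by norm_num), ← ENNReal.ofReal_mul (by positivity),
      ← mul_pow]
    exact ENNReal.ofReal_le_ofReal (pow_le_pow_left₀ hr0.le hr n)
  have hVr0 : volume (ball x r) ≠ 0 := (measure_ball_pos _ _ hr0).ne'
  have hVrt : volume (ball x r) ≠ ⊤ := measure_ball_lt_top.ne
  have hVs0 : volume (ball y s) ≠ 0 := (measure_ball_pos _ _ hs).ne'
  have hVst : volume (ball y s) ≠ ⊤ := measure_ball_lt_top.ne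
  refine ENNReal.div_le_of_le_mul ?_
  calc _ ≤ ∫⁻ y in ball x r, ‖u y - t‖ₑ := lintegral_mono_set hsub
    _ = (∫⁻ y in ball x r, ‖u y - t‖ₑ) / volume (ball x r) * volume (ball x r) := by
        rw [ENNReal.div_mul_cancel hVr0 hVrt]
    _ ≤ (∫⁻ y in ball x r, ‖u y - t‖ₑ) / volume (ball x r) * (2 ^ n * volume (ball y s)) := by
        exact mul_le_mul' le_rfl hV
    _ = _ := by ring

theorem lav_tri {n : ℕ} {u : Euc n → ℝ} (hum : Measurable u) (x : Euc n) {r : ℝ} (hr : 0 < r)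
    (t s : ℝ) : ‖t - s‖ₑ ≤ lav u x r t + lav u x r s := by
  have hV0 : volume (ball x r) ≠ 0 := (measure_ball_pos _ _ hr).ne'
  have hVt : volume (ball x r) ≠ ⊤ := measure_ball_lt_top.ne
  unfold lav
  rw [← ENNReal.add_div, ENNReal.le_div_iff_mul_le (Or.inl hV0) (Or.inl hVt),
    ← lintegral_add_left (by fun_prop), ← setLIntegral_const]
  apply lintegral_mono
  intro y
  calc ‖t - s‖ₑ = ‖(u y - s) - (u y - t)‖ₑ := by congr 1; ring
    _ ≤ ‖u y - s‖ₑ + ‖u y - t‖ₑ := enorm_sub_le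
    _ = _ := add_comm _ _

theorem lav_tri2 {n : ℕ} {u : Euc n → ℝ} (hum : Measurable u) (x : Euc n) {r : ℝ} (hr : 0 < r)
    (t s : ℝ) : lav u x r t ≤ lav u x r s + ‖t - s‖ₑ := by
  have hV0 : volume (ball x r) ≠ 0 := (measure_ball_pos _ _ hr).ne'
  have hVt : volume (ball x r) ≠ ⊤ := measure_ball_lt_top.ne
  unfold lav
  refine ENNReal.div_le_of_le_mul ?_
  rw [add_mul, ENNReal.div_mul_cancel hV0 hVt, ← setLIntegral_const,
    ← lintegral_add_left (by fun_prop)]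
  apply lintegral_mono
  intro y
  calc ‖u y - t‖ₑ = ‖(u y - s) - (t - s)‖ₑ := by congr 1; ring
    _ ≤ ‖u y - s‖ₑ + ‖t - s‖ₑ := enorm_sub_le

theorem exists_lav_le {n : ℕ} {u : Euc n → ℝ} (hum : Measurable u) (x : Euc n) {r : ℝ} (hr : 0 < r) :
    ∃ t, lav u x r t ≤ dosc u x r := by
  have hV0 : volume (ball x r) ≠ 0 := (measure_ball_pos _ _ hr).ne'
  have hVt : volume (ball x r) ≠ ⊤ := measure_ball_lt_top.ne
  have hm : Measurable fun y => ∫⁻ z in ball x r, ‖u z - u y‖ₑ := by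
    apply Measurable.lintegral_prod_right'
      (f := fun p : Euc n × Euc n => ‖u p.2 - u p.1‖ₑ)
    fun_prop
  obtain ⟨y, -, hy⟩ := exists_le_setLAverage (μ := (volume : Measure (Euc n))) hV0 hVt
    (f := fun y => ∫⁻ z in ball x r, ‖u z - u y‖ₑ) hm.aemeasurable
  refine ⟨u y, ?_⟩
  unfold lav dosc
  rw [setLAverage_eq] at hy
  calc _ ≤ _ := ENNReal.div_le_div_right hy _
    _ = _ := by
      rw [div_eq_mul_inv, div_eq_mul_inv, div_eq_mul_inv, mul_assoc, sq,
        ENNReal.mul_inv (Or.inl hV0) (Or.inl hVt)]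

theorem lav_lim {n : ℕ} {u : Euc n → ℝ} (hum : Measurable u) (x : Euc n) {r : ℝ} (hr : 0 < r)
    (hS : ∑' j : ℕ, dosc u x (r / 2 ^ j) ≠ ⊤) :
    ∃ t, Tendsto (fun ρ => lav u x ρ t) (𝓝[>] 0) (𝓝 0) ∧
      lav u x r t ≤ (1 + 2 ^ n) * ∑' j : ℕ, dosc u x (r / 2 ^ j) := by
  have hrj : ∀ j : ℕ, 0 < r / 2 ^ j := fun j => by positivity
  choose a ha using fun j : ℕ => exists_lav_le hum x (hrj j)
  set D : ℕ → ℝ≥0∞ := fun j => dosc u x (r / 2 ^ j) with hD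
  have hstep : ∀ j, edist (a j) (a (j+1)) ≤ 2 ^ n * D j + D (j+1) := by
    intro j
    rw [edist_eq_enorm_sub]
    refine (lav_tri hum x (hrj (j+1)) _ _).trans (add_le_add ?_ (ha _))
    refine (lav_mono u (hrj (j+1)) (x := x) (r := r / 2 ^ j) ?_ ?_ (hrj j) _).trans
      (mul_le_mul' le_rfl (ha j))
    · apply ball_subset_ball
      apply div_le_div_of_nonneg_left hr.le (by positivity)
      exact pow_le_pow_right₀ (by norm_num) (by omega)
    · rw [pow_succ]; apply le_of_eq; field_simp
  have hD1 : ∑' j, D (j+1) ≤ ∑' j, D j :=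
    ENNReal.tsum_comp_le_tsum_of_injective (add_left_injective 1) D
  have h2n : (2 : ℝ≥0∞) ^ n ≠ ⊤ := ENNReal.pow_ne_top ENNReal.ofNat_ne_top
  have hsum : ∑' j, (2 ^ n * D j + D (j+1)) ≠ ⊤ := by
    rw [ENNReal.tsum_add, ENNReal.tsum_mul_left]
    exact ENNReal.add_ne_top.2 ⟨ENNReal.mul_ne_top h2n hS, ne_top_of_le_ne_top hS hD1⟩
  obtain ⟨t, ht⟩ := cauchySeq_tendsto_of_complete (cauchySeq_of_edist_le_of_tsum_ne_top _ hstep hsum)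
  have hb : ∀ j, lav u x (r / 2 ^ j) t ≤ (1 + 2 ^ n) * ∑' m, D (m + j) := by
    intro j
    have h1 := edist_le_tsum_of_edist_le_of_tendsto _ hstep ht j
    calc _ ≤ _ := lav_tri2 hum x (hrj j) t (a j)
      _ ≤ D j + ∑' m, (2 ^ n * D (j + m) + D (j + m + 1)) := by
        refine add_le_add (ha j) ?_
        rw [← edist_eq_enorm_sub, edist_comm]; exact h1
      _ = (D j + ∑' m, D (j + m + 1)) + 2 ^ n * ∑' m, D (m + j) := by
        rw [ENNReal.tsum_add, ENNReal.tsum_mul_left]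
        simp only [add_comm j]
        ring
      _ = _ := by
        have : ∑' m, D (m + j) = D j + ∑' m, D (j + m + 1) := by
          rw [tsum_eq_zero_add' ENNReal.summable]
          simp only [zero_add]
          congr 2; ext m; congr 1; ring
        rw [add_mul, one_mul, ← this]
  have htail : Tendsto (fun j => 2 ^ n * ((1 + 2 ^ n) * ∑' m, D (m + j))) atTop (𝓝 0) := by
    have h0 := ENNReal.tendsto_sum_nat_add D hS
    have h1 : Tendsto (fun j => (1 + 2 ^ n) * ∑' m, D (m + j)) atTop (𝓝 ((1 + 2 ^ n) * 0)) :=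
      ENNReal.Tendsto.const_mul h0 (Or.inr (by simp [h2n]))
    have h2 := ENNReal.Tendsto.const_mul h1 (a := 2 ^ n) (Or.inr h2n)
    simpa using h2
  refine ⟨t, ?_, by simpa using hb 0⟩
  rw [ENNReal.tendsto_nhds_zero]
  intro ε hε
  obtain ⟨N, hN⟩ := eventually_atTop.1 (ENNReal.tendsto_nhds_zero.1 htail ε hε)
  have : Ioo (0:ℝ) (r / 2 ^ N) ∈ 𝓝[>] (0:ℝ) := Ioo_mem_nhdsGT (hrj N)
  filter_upwards [this] with ρ hρ
  have hρr : ρ < r := hρ.2.trans_le (div_le_self hr.le (one_le_pow₀ (by norm_num)))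
  obtain ⟨j, hj1, hj2⟩ := exists_nat_pow_near_of_lt_one (x := ρ / r) (y := (1/2 : ℝ))
    (div_pos hρ.1 hr) ((div_le_one hr).2 hρr.le) (by norm_num) (by norm_num)
  have e : ∀ k : ℕ, r / 2 ^ k = (1/2 : ℝ) ^ k * r := by
    intro k; rw [one_div, inv_pow]; field_simp
  have hj1' : r / 2 ^ (j+1) < ρ := by rw [e]; exact (lt_div_iff₀ hr).1 hj1
  have hj2' : ρ ≤ r / 2 ^ j := by rw [e]; exact (div_le_iff₀ hr).1 hj2
  have hjN : N ≤ j := by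
    by_contra hcon
    have : r / 2 ^ N ≤ r / 2 ^ (j+1) := by
      apply div_le_div_of_nonneg_left hr.le (by positivity)
      exact pow_le_pow_right₀ (by norm_num) (by omega)
    linarith [hρ.2]
  calc _ ≤ 2 ^ n * lav u x (r / 2 ^ j) t := by
        refine lav_mono u hρ.1 (ball_subset_ball hj2') ?_ (hrj j) t
        rw [pow_succ] at hj1'
        have : r / (2 ^ j * 2) = r / 2 ^ j / 2 := by field_simp
        linarith
    _ ≤ _ := mul_le_mul' le_rfl (hb j)
    _ ≤ ε := hN j hjN

theorem lav_unique {n : ℕ} {u : Euc n → ℝ} (hum : Measurable u) (x : Euc n) {t s : ℝ}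
    (ht : Tendsto (fun ρ => lav u x ρ t) (𝓝[>] 0) (𝓝 0))
    (hs : Tendsto (fun ρ => lav u x ρ s) (𝓝[>] 0) (𝓝 0)) : t = s := by
  have h := ht.add hs
  rw [add_zero] at h
  have h2 : ‖t - s‖ₑ ≤ 0 := by
    refine ge_of_tendsto h ?_
    filter_upwards [self_mem_nhdsWithin] with ρ hρ
    exact lav_tri hum x hρ t s
  have h3 : ‖t - s‖ₑ = 0 := le_antisymm h2 bot_le
  rw [enorm_eq_zero] at h3
  linarith

theorem lav_pair {n : ℕ} {u : Euc n → ℝ} (hum : Measurable u) {x y : Euc n} (hxy : x ≠ y) {t s : ℝ}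
    (ht : Tendsto (fun ρ => lav u x ρ t) (𝓝[>] 0) (𝓝 0))
    (hs : Tendsto (fun ρ => lav u y ρ s) (𝓝[>] 0) (𝓝 0)) :
    ‖t - s‖ₑ ≤ 2 ^ n * (1 + 2 ^ n) * (∑' j : ℕ, dosc u x (2 * dist x y / 2 ^ j) +
      ∑' j : ℕ, dosc u y (2 * dist x y / 2 ^ j)) := by
  have hd : 0 < dist x y := dist_pos.2 hxy
  have hc : (2 : ℝ≥0∞) ^ n * (1 + 2 ^ n) ≠ 0 := by positivity
  by_cases h1 : ∑' j : ℕ, dosc u x (2 * dist x y / 2 ^ j) = ⊤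
  · rw [h1, top_add, ENNReal.mul_top hc]; exact le_top
  by_cases h2 : ∑' j : ℕ, dosc u y (2 * dist x y / 2 ^ j) = ⊤
  · rw [h2, add_top, ENNReal.mul_top hc]; exact le_top
  obtain ⟨t', ht', hl1⟩ := lav_lim hum x (by positivity) h1
  obtain ⟨s', hs', hl2⟩ := lav_lim hum y (by positivity) h2
  obtain rfl := lav_unique hum x ht ht'
  obtain rfl := lav_unique hum y hs hs'
  calc _ ≤ _ := lav_tri hum x hd t s
    _ ≤ 2 ^ n * lav u x (2 * dist x y) t + 2 ^ n * lav u y (2 * dist x y) s := by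
      refine add_le_add (lav_mono u hd (ball_subset_ball (by linarith)) le_rfl (by positivity) _)
        (lav_mono u hd (ball_subset_ball' (by linarith)) le_rfl (by positivity) _)
    _ ≤ 2 ^ n * _ + 2 ^ n * _ := add_le_add (mul_le_mul' le_rfl hl1) (mul_le_mul' le_rfl hl2)
    _ = _ := by ring

theorem lav_real {n : ℕ} {u : Euc n → ℝ} (hum : Measurable u) (x : Euc n) {t : ℝ}
    (ht : Tendsto (fun ρ => lav u x ρ t) (𝓝[>] 0) (𝓝 0)) :
    Tendsto (fun ρ : ℝ => ⨍ y in ball x ρ, |u y - t|) (𝓝[>] (0 : ℝ)) (𝓝 0) := by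
  have h := (ENNReal.tendsto_toReal ENNReal.zero_ne_top).comp ht
  rw [ENNReal.toReal_zero] at h
  refine h.congr ?_
  intro ρ
  rw [setAverage_eq]
  simp only [← Real.norm_eq_abs]
  rw [integral_norm_eq_lintegral_enorm (by fun_prop)]
  simp only [Function.comp_apply, lav, ENNReal.toReal_div, smul_eq_mul, Measure.real]
  ring

theorem lav_trace {n : ℕ} {u : Euc n → ℝ} (hum : Measurable u) (hu : LocallyIntegrable u volume)
    (x : Euc n) {t : ℝ}
    (ht : Tendsto (fun ρ => lav u x ρ t) (𝓝[>] 0) (𝓝 0)) : HasTraceAt u x t := by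
  have h := lav_real hum x ht
  unfold HasTraceAt
  rw [tendsto_iff_norm_sub_tendsto_zero]
  refine squeeze_zero' (Eventually.of_forall fun _ => norm_nonneg _) ?_ h
  filter_upwards [self_mem_nhdsWithin] with ρ hρ
  have hρ' : (0:ℝ) < ρ := hρ
  have hV0 : volume (ball x ρ) ≠ 0 := (measure_ball_pos _ _ hρ').ne'
  have hVt : volume (ball x ρ) ≠ ⊤ := measure_ball_lt_top.ne
  have hVr : volume.real (ball x ρ) ≠ 0 := ENNReal.toReal_ne_zero.2 ⟨hV0, hVt⟩
  have hi : IntegrableOn u (ball x ρ) volume :=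
    (hu.integrableOn_isCompact (isCompact_closedBall x ρ)).mono_set ball_subset_closedBall
  have e : (⨍ y in ball x ρ, u y) - t = ⨍ y in ball x ρ, (u y - t) := by
    rw [setAverage_eq, setAverage_eq, integral_sub hi (integrableOn_const hVt)]
    simp only [setIntegral_const, smul_eq_mul]
    field_simp
  rw [e, setAverage_eq, setAverage_eq, norm_smul, smul_eq_mul, Real.norm_of_nonneg (by positivity)]
  refine mul_le_mul_of_nonneg_left ?_ (by positivity)
  exact norm_integral_le_integral_norm _

theorem cs_sum (D : ℕ → ℝ≥0∞) :
    (∑' j, D j) ^ 2 ≤ 3 * ∑' j, ENNReal.ofReal ((3/2 : ℝ) ^ j) * D j ^ 2 := by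
  have h := cs_lintegral ((Measure.count : Measure ℕ).withDensity fun j => ENNReal.ofReal ((2/3 : ℝ) ^ j))
    (F := fun j => ENNReal.ofReal ((3/2 : ℝ) ^ j) * D j) (Measurable.of_discrete).aemeasurable
  have e : ∀ j : ℕ, ENNReal.ofReal ((2/3 : ℝ) ^ j) * ENNReal.ofReal ((3/2 : ℝ) ^ j) = 1 := by
    intro j
    rw [← ENNReal.ofReal_mul (by positivity), ← mul_pow]
    norm_num
  rw [lintegral_withDensity_eq_lintegral_mul _ Measurable.of_discrete Measurable.of_discrete,
    lintegral_withDensity_eq_lintegral_mul _ Measurable.of_discrete Measurable.of_discrete,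
    withDensity_apply _ MeasurableSet.univ, Measure.restrict_univ, lintegral_count, lintegral_count,
    lintegral_count] at h
  have e1 : ∀ j, ((fun j : ℕ => ENNReal.ofReal ((2/3 : ℝ) ^ j)) * fun j => ENNReal.ofReal ((3/2 : ℝ) ^ j) * D j) j
      = D j := by
    intro j
    rw [Pi.mul_apply, ← mul_assoc, e, one_mul]
  have e2 : ∀ j, ((fun j : ℕ => ENNReal.ofReal ((2/3 : ℝ) ^ j)) * fun j => (ENNReal.ofReal ((3/2 : ℝ) ^ j) * D j) ^ 2) j
      = ENNReal.ofReal ((3/2 : ℝ) ^ j) * D j ^ 2 := by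
    intro j
    rw [Pi.mul_apply, mul_pow, sq (ENNReal.ofReal _), ← mul_assoc, ← mul_assoc, e, one_mul]
  have e3 : ∑' j : ℕ, ENNReal.ofReal ((2/3 : ℝ) ^ j) = 3 := by
    rw [← ENNReal.ofReal_tsum_of_nonneg (fun _ => by positivity)
      (summable_geometric_of_lt_one (by norm_num) (by norm_num)),
      tsum_geometric_of_lt_one (by norm_num) (by norm_num)]
    norm_num
  simp only [e1, e2, e3] at h
  exact h

theorem swap3 {α : Type*} [MeasurableSpace α] (σ μ : Measure α) [SFinite σ] [SFinite μ]
    (H : α → α → α → ℝ≥0∞) (hHm : Measurable fun p : α × α × α => H p.1 p.2.1 p.2.2) :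
    ∫⁻ x, ∫⁻ y, ∫⁻ z, H x y z ∂μ ∂σ ∂σ = ∫⁻ z, ∫⁻ x, ∫⁻ y, H x y z ∂σ ∂σ ∂μ := by
  have h1 : ∀ x, ∫⁻ y, ∫⁻ z, H x y z ∂μ ∂σ = ∫⁻ z, ∫⁻ y, H x y z ∂σ ∂μ := by
    intro x
    apply lintegral_lintegral_swap
    exact (hHm.comp (by fun_prop : Measurable fun p : α × α => (x, p.1, p.2))).aemeasurable
  simp only [h1]
  have h2 : Measurable fun p : (α × α) × α => H p.1.1 p.2 p.1.2 :=
    hHm.comp (by fun_prop : Measurable fun p : (α × α) × α => (p.1.1, p.2, p.1.2))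
  have h3 : Measurable fun p : α × α => ∫⁻ y, H p.1 y p.2 ∂σ := h2.lintegral_prod_right'
  exact lintegral_lintegral_swap (f := fun x z => ∫⁻ y, H x y z ∂σ) h3.aemeasurable

theorem key_j {n : ℕ} (hn : 2 ≤ n) {d A : ℝ} (hd0 : 0 < d) (hdn : d < (n:ℝ) - 1) (hA : 0 ≤ A)
    {Γ : Set (Euc n)} (hne : Γ.Nonempty) (hcl : IsClosed Γ)
    (σ : Measure (Euc n)) [SFinite σ]
    (hσ : ∀ z r, 0 < r → σ (ball z r) ≤ ENNReal.ofReal (A * r ^ d))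
    (hσΓ : ∀ᵐ x ∂σ, x ∈ Γ) {F : Euc n → ℝ≥0∞} (hF : Measurable F) (hF0 : ∀ z ∈ Γ, F z = 0) (j : ℕ) :
    ∫⁻ x, ∫⁻ y, ENNReal.ofReal (dist x y ^ (-(d+1))) *
      (ENNReal.ofReal ((2 * dist x y / 2 ^ j) ^ (2 - (n:ℝ))) *
        ∫⁻ z in ball x (5 * (2 * dist x y / 2 ^ j)), F z ^ 2) ∂σ ∂σ ≤
    ENNReal.ofReal ((A * 2 ^ d / (1 - 2 ^ (d - ((n:ℝ) - 1 + d))) * (2 ^ (2 - (n:ℝ)) * 10 ^ ((n:ℝ) - 1))) *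
      (A * 2 ^ d / (1 - 2 ^ (d - ((n:ℝ) - 1)))) * (1/2) ^ j) *
      ∫⁻ z, F z ^ 2 * ENNReal.ofReal (infDist z Γ ^ (d + 1 - (n:ℝ))) := by
  set H : Euc n → Euc n → Euc n → ℝ≥0∞ := fun x y z =>
    if dist z x < 5 * (2 * dist x y / 2 ^ j) then
      ENNReal.ofReal (dist x y ^ (-(d+1))) * ENNReal.ofReal ((2 * dist x y / 2 ^ j) ^ (2 - (n:ℝ))) * F z ^ 2
      else 0 with hH
  have hHm : Measurable fun p : Euc n × Euc n × Euc n => H p.1 p.2.1 p.2.2 := by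
    apply Measurable.ite
    · exact measurableSet_lt (by fun_prop) (by fun_prop)
    · fun_prop
    · fun_prop
  have e1 : ∀ x y, ENNReal.ofReal (dist x y ^ (-(d+1))) *
      (ENNReal.ofReal ((2 * dist x y / 2 ^ j) ^ (2 - (n:ℝ))) *
        ∫⁻ z in ball x (5 * (2 * dist x y / 2 ^ j)), F z ^ 2) = ∫⁻ z, H x y z := by
    intro x y
    rw [← mul_assoc, ← lintegral_const_mul _ (by fun_prop), ← lintegral_indicator measurableSet_ball]
    rfl
  simp only [e1]
  have e2 : ∫⁻ x, ∫⁻ y, ∫⁻ z, H x y z ∂volume ∂σ ∂σ = ∫⁻ z, ∫⁻ x, ∫⁻ y, H x y z ∂σ ∂σ := swap3 σ volume H hHm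
  rw [e2, ← lintegral_const_mul' _ _ ENNReal.ofReal_ne_top]
  apply lintegral_mono
  intro z
  dsimp only
  by_cases hz : z ∈ Γ
  · simp [hH, hF0 z hz]
  have hδ : 0 < infDist z Γ := (hcl.notMem_iff_infDist_pos hne).1 hz
  set B := A * 2 ^ d / (1 - 2 ^ (d - ((n:ℝ) - 1 + d))) with hB
  set B' := A * 2 ^ d / (1 - 2 ^ (d - ((n:ℝ) - 1))) with hB'
  have hn' : (2:ℝ) ≤ n := by exact_mod_cast hn
  have hB0 : 0 ≤ B := by
    apply div_nonneg (by positivity)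
    rw [sub_nonneg]; apply Real.rpow_le_one_of_one_le_of_nonpos (by norm_num); linarith
  have hB0' : 0 ≤ B' := by
    apply div_nonneg (by positivity)
    rw [sub_nonneg]; apply Real.rpow_le_one_of_one_le_of_nonpos (by norm_num); linarith
  set c : ℝ := B * (2 ^ (2 - (n:ℝ)) * 10 ^ ((n:ℝ) - 1)) * (1/2) ^ j with hc
  have hc0 : 0 ≤ c := by positivity
  have hy : ∀ x, x ∈ Γ → ∫⁻ y, H x y z ∂σ ≤
      ENNReal.ofReal c * F z ^ 2 * ENNReal.ofReal (dist x z ^ (-((n:ℝ) - 1))) := by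
    intro x hx
    have hxz : 0 < dist x z := dist_pos.2 (fun h => hz (h ▸ hx))
    set s := 2 ^ j * dist x z / 10 with hs
    have hs0 : 0 < s := by positivity
    have ht := tail_int σ hA (a := (n:ℝ) - 1 + d) (by linarith) hσ (by linarith) x hs0
    calc ∫⁻ y, H x y z ∂σ ≤ ∫⁻ y in {y | s ≤ dist y x},
          (ENNReal.ofReal ((2 / 2 ^ j) ^ (2 - (n:ℝ))) * F z ^ 2) * ENNReal.ofReal (dist y x ^ (-((n:ℝ) - 1 + d))) ∂σ := by
          rw [← lintegral_indicator (measurableSet_le (by fun_prop) (by fun_prop))]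
          apply lintegral_mono
          intro y
          simp only [hH]
          split_ifs with h
          · have hsy : s < dist y x := by
              rw [hs, dist_comm x z, dist_comm y x]
              have : 5 * (2 * dist x y / 2 ^ j) = 10 * dist x y / 2 ^ j := by ring
              rw [this, lt_div_iff₀ (by positivity)] at h
              linarith
            rw [indicator_of_mem (show y ∈ {y | s ≤ dist y x} from hsy.le)]
            have hp : 0 < dist y x := hs0.trans hsy
            rw [dist_comm x y, mul_right_comm _ (F z ^ 2), ← ENNReal.ofReal_mul (by positivity),
              ← ENNReal.ofReal_mul (by positivity)]
            refine le_of_eq ?_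
            congr 2
            rw [mul_div_right_comm, Real.mul_rpow (by positivity) (by positivity), mul_left_comm,
              ← Real.rpow_add hp]
            congr 2; ring
          · exact bot_le
      _ = (ENNReal.ofReal ((2 / 2 ^ j) ^ (2 - (n:ℝ))) * F z ^ 2) *
          ∫⁻ y in {y | s ≤ dist y x}, ENNReal.ofReal (dist y x ^ (-((n:ℝ) - 1 + d))) ∂σ := by
          rw [lintegral_const_mul _ (by fun_prop)]
      _ ≤ (ENNReal.ofReal ((2 / 2 ^ j) ^ (2 - (n:ℝ))) * F z ^ 2) *
          ENNReal.ofReal (B * s ^ (d - ((n:ℝ) - 1 + d))) := mul_le_mul' le_rfl ht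
      _ = _ := by
          rw [mul_right_comm, mul_right_comm _ (F z ^ 2), ← ENNReal.ofReal_mul (by positivity),
            ← ENNReal.ofReal_mul (by positivity)]
          congr 2
          have e3 : d - ((n:ℝ) - 1 + d) = -((n:ℝ) - 1) := by ring
          rw [e3, hs, hc, Real.div_rpow (by positivity) (by positivity),
            Real.div_rpow (by positivity) (by positivity), Real.mul_rpow (by positivity) (by positivity),
            Real.rpow_neg (by norm_num : (0:ℝ) ≤ 10)]
          have e4 : ((2:ℝ) ^ j) ^ (-((n:ℝ) - 1)) = ((2:ℝ) ^ j) ^ (2 - (n:ℝ)) * (1/2) ^ j := by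
            rw [show -((n:ℝ) - 1) = (2 - (n:ℝ)) - 1 by ring, Real.rpow_sub (by positivity), Real.rpow_one,
              one_div, inv_pow]
            rfl
          have e5 : ((2:ℝ) ^ j) ^ (2 - (n:ℝ)) ≠ 0 := by positivity
          have e6 : (10:ℝ) ^ ((n:ℝ) - 1) ≠ 0 := by positivity
          rw [e4]
          field_simp
  calc ∫⁻ x, ∫⁻ y, H x y z ∂σ ∂σ ≤ ∫⁻ x in {x | infDist z Γ ≤ dist x z},
        ENNReal.ofReal c * F z ^ 2 * ENNReal.ofReal (dist x z ^ (-((n:ℝ) - 1))) ∂σ := by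
        rw [← lintegral_indicator (measurableSet_le (by fun_prop) (by fun_prop))]
        apply lintegral_mono_ae
        filter_upwards [hσΓ] with x hx
        rw [indicator_of_mem (show x ∈ {x | infDist z Γ ≤ dist x z} from by
          show infDist z Γ ≤ dist x z
          rw [dist_comm]; exact infDist_le_dist_of_mem hx)]
        exact hy x hx
    _ = ENNReal.ofReal c * F z ^ 2 * ∫⁻ x in {x | infDist z Γ ≤ dist x z},
          ENNReal.ofReal (dist x z ^ (-((n:ℝ) - 1))) ∂σ := by
        rw [lintegral_const_mul _ (by fun_prop)]
    _ ≤ ENNReal.ofReal c * F z ^ 2 * ENNReal.ofReal (B' * infDist z Γ ^ (d - ((n:ℝ) - 1))) :=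
        mul_le_mul' le_rfl (tail_int σ hA hdn hσ (by linarith) z hδ)
    _ = _ := by
        rw [ENNReal.ofReal_mul hB0', show d + 1 - (n:ℝ) = d - ((n:ℝ) - 1) by ring,
          show B * (2 ^ (2 - (n:ℝ)) * 10 ^ ((n:ℝ) - 1)) * B' * (1/2) ^ j = c * B' by rw [hc]; ring,
          ENNReal.ofReal_mul hc0]
        ring

/-- energy quantity -/
def enE {n : ℕ} (F : Euc n → ℝ≥0∞) (x y : Euc n) : ℝ≥0∞ :=
  ∑' j : ℕ, ENNReal.ofReal ((3/2 : ℝ) ^ j) *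
    (ENNReal.ofReal ((2 * dist x y / 2 ^ j) ^ (2 - (n:ℝ))) *
        ∫⁻ z in ball x (5 * (2 * dist x y / 2 ^ j)), F z ^ 2)

theorem enE_term_meas {n : ℕ} {F : Euc n → ℝ≥0∞} (hF : Measurable F) (j : ℕ) :
    Measurable fun p : Euc n × Euc n => 
    (ENNReal.ofReal ((2 * dist p.1 p.2 / 2 ^ j) ^ (2 - (n:ℝ))) *
        ∫⁻ z in ball p.1 (5 * (2 * dist p.1 p.2 / 2 ^ j)), F z ^ 2) := by
  apply Measurable.mul (by fun_prop)
  have e : ∀ p : Euc n × Euc n, ∫⁻ z in ball p.1 (5 * (2 * dist p.1 p.2 / 2 ^ j)), F z ^ 2 =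
      ∫⁻ z, if dist z p.1 < 5 * (2 * dist p.1 p.2 / 2 ^ j) then F z ^ 2 else 0 := by
    intro p
    rw [← lintegral_indicator measurableSet_ball]
    rfl
  simp only [e]
  apply Measurable.lintegral_prod_right'
    (f := fun q : (Euc n × Euc n) × Euc n => if dist q.2 q.1.1 < 5 * (2 * dist q.1.1 q.1.2 / 2 ^ j) then F q.2 ^ 2 else 0)
  apply Measurable.ite
  · exact measurableSet_lt (by fun_prop) (by fun_prop)
  · fun_prop
  · fun_prop

theorem enE_meas {n : ℕ} {F : Euc n → ℝ≥0∞} (hF : Measurable F) :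
    Measurable fun p : Euc n × Euc n => enE F p.1 p.2 := by
  unfold enE
  exact Measurable.tsum fun j => (enE_term_meas hF j).const_mul _

theorem key_sum {n : ℕ} (hn : 2 ≤ n) {d A : ℝ} (hd0 : 0 < d) (hdn : d < (n:ℝ) - 1) (hA : 0 ≤ A)
    {Γ : Set (Euc n)} (hne : Γ.Nonempty) (hcl : IsClosed Γ)
    (σ : Measure (Euc n)) [SFinite σ]
    (hσ : ∀ z r, 0 < r → σ (ball z r) ≤ ENNReal.ofReal (A * r ^ d))
    (hσΓ : ∀ᵐ x ∂σ, x ∈ Γ) {F : Euc n → ℝ≥0∞} (hF : Measurable F) (hF0 : ∀ z ∈ Γ, F z = 0) :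
    ∫⁻ x, ∫⁻ y, ENNReal.ofReal (dist x y ^ (-(d+1))) * enE F x y ∂σ ∂σ ≤
    4 * ENNReal.ofReal ((A * 2 ^ d / (1 - 2 ^ (d - ((n:ℝ) - 1 + d))) * (2 ^ (2 - (n:ℝ)) * 10 ^ ((n:ℝ) - 1))) *
      (A * 2 ^ d / (1 - 2 ^ (d - ((n:ℝ) - 1))))) *
      ∫⁻ z, F z ^ 2 * ENNReal.ofReal (infDist z Γ ^ (d + 1 - (n:ℝ))) := by
  have hk := key_j hn hd0 hdn hA hne hcl σ hσ hσΓ hF hF0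
  set K := (A * 2 ^ d / (1 - 2 ^ (d - ((n:ℝ) - 1 + d))) * (2 ^ (2 - (n:ℝ)) * 10 ^ ((n:ℝ) - 1))) *
      (A * 2 ^ d / (1 - 2 ^ (d - ((n:ℝ) - 1)))) with hK
  set N := ∫⁻ z, F z ^ 2 * ENNReal.ofReal (infDist z Γ ^ (d + 1 - (n:ℝ)))
  set T : ℕ → Euc n → Euc n → ℝ≥0∞ := fun j x y => 
    (ENNReal.ofReal ((2 * dist x y / 2 ^ j) ^ (2 - (n:ℝ))) *
        ∫⁻ z in ball x (5 * (2 * dist x y / 2 ^ j)), F z ^ 2) with hT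
  have hTm : ∀ j, Measurable fun p : Euc n × Euc n => 
      ENNReal.ofReal (dist p.1 p.2 ^ (-(d+1))) * T j p.1 p.2 := by
    intro j
    exact Measurable.mul (by fun_prop) (enE_term_meas hF j)
  calc _ = ∫⁻ x, ∫⁻ y, ∑' j : ℕ, ENNReal.ofReal ((3/2 : ℝ) ^ j) *
          (ENNReal.ofReal (dist x y ^ (-(d+1))) * T j x y) ∂σ ∂σ := by
        congr 1; ext x; congr 1; ext y
        rw [enE, ← ENNReal.tsum_mul_left]
        congr 1; ext j
        rw [mul_left_comm]
    _ = ∑' j : ℕ, ENNReal.ofReal ((3/2 : ℝ) ^ j) *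
          ∫⁻ x, ∫⁻ y, (ENNReal.ofReal (dist x y ^ (-(d+1))) * T j x y) ∂σ ∂σ := by
        have h1 : ∀ x, ∫⁻ y, ∑' j : ℕ, ENNReal.ofReal ((3/2 : ℝ) ^ j) *
          (ENNReal.ofReal (dist x y ^ (-(d+1))) * T j x y) ∂σ = ∑' j : ℕ, ENNReal.ofReal ((3/2 : ℝ) ^ j) *
          ∫⁻ y, (ENNReal.ofReal (dist x y ^ (-(d+1))) * T j x y) ∂σ := by
          intro x
          rw [lintegral_tsum]
          · congr 1; ext j
            rw [lintegral_const_mul' _ _ ENNReal.ofReal_ne_top]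
          · intro j
            exact (((hTm j).comp measurable_prodMk_left).const_mul _).aemeasurable
        simp only [h1]
        rw [lintegral_tsum]
        · congr 1; ext j
          rw [lintegral_const_mul' _ _ ENNReal.ofReal_ne_top]
        · intro j
          exact ((hTm j).lintegral_prod_right'.const_mul _).aemeasurable
    _ ≤ ∑' j : ℕ, ENNReal.ofReal ((3/2 : ℝ) ^ j) * (ENNReal.ofReal (K * (1/2) ^ j) * N) := by
        apply ENNReal.tsum_le_tsum
        intro j
        exact mul_le_mul' le_rfl (hk j)
    _ = (∑' j : ℕ, ENNReal.ofReal ((3/4 : ℝ) ^ j)) * (ENNReal.ofReal K * N) := by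
        rw [← ENNReal.tsum_mul_right]
        congr 1; ext j
        rw [mul_comm K, ENNReal.ofReal_mul (by positivity), ← mul_assoc, ← mul_assoc,
          ← ENNReal.ofReal_mul (by positivity), ← mul_pow, ← mul_assoc]
        norm_num
    _ = _ := by
        rw [← ENNReal.ofReal_tsum_of_nonneg (fun _ => by positivity)
          (summable_geometric_of_lt_one (by norm_num) (by norm_num)),
          tsum_geometric_of_lt_one (by norm_num) (by norm_num)]
        norm_num
        rw [mul_assoc]

theorem enn_add_sq (a b : ℝ≥0∞) : (a + b) ^ 2 ≤ 4 * (a ^ 2 + b ^ 2) := by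
  rcases le_total a b with h | h
  · calc (a + b) ^ 2 ≤ (b + b) ^ 2 := by gcongr
      _ = 4 * b ^ 2 := by ring
      _ ≤ _ := by gcongr; exact le_add_self
  · calc (a + b) ^ 2 ≤ (a + a) ^ 2 := by gcongr
      _ = 4 * a ^ 2 := by ring
      _ ≤ _ := by gcongr; exact le_self_add

theorem dosc_enE {n : ℕ} {u : Euc n → ℝ} (hum : Measurable u) {F : Euc n → ℝ≥0∞} (hF : Measurable F)
    (hT : ∀ h x r, ∫⁻ y in ball x r, ‖u (y + h) - u y‖ₑ ≤
      ‖h‖ₑ * ∫⁻ y in ball x (r + 2 * ‖h‖), F y)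
    {x y : Euc n} (hxy : x ≠ y) :
    (∑' j : ℕ, dosc u x (2 * dist x y / 2 ^ j)) ^ 2 ≤
      3 * (ENNReal.ofReal (4 * 20 ^ n) / volume (ball (0 : Euc n) 1)) * enE F x y := by
  have hd : 0 < dist x y := dist_pos.2 hxy
  refine (cs_sum _).trans ?_
  rw [mul_assoc]
  refine mul_le_mul' le_rfl ?_
  rw [enE, ← ENNReal.tsum_mul_left]
  apply ENNReal.tsum_le_tsum
  intro j
  rw [mul_left_comm]
  exact mul_le_mul' le_rfl (dosc_sq hum hF hT x (by positivity))

theorem e3_aux {a p q w k e f : ℝ≥0∞} (h : a ≤ w * (p + q)) (hp : p ^ 2 ≤ k * e) (hq : q ^ 2 ≤ k * f) :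
    a ^ 2 ≤ w ^ 2 * 4 * k * (e + f) := by
  calc a ^ 2 ≤ (w * (p + q)) ^ 2 := by gcongr
    _ = w ^ 2 * (p + q) ^ 2 := by rw [mul_pow]
    _ ≤ w ^ 2 * (4 * (p ^ 2 + q ^ 2)) := mul_le_mul' le_rfl (enn_add_sq _ _)
    _ ≤ w ^ 2 * (4 * (k * e + k * f)) :=
      mul_le_mul' le_rfl (mul_le_mul' le_rfl (add_le_add hp hq))
    _ = _ := by ring

theorem int_sym {α : Type*} [MeasurableSpace α] (σ : Measure α) [SFinite σ] (W : α → α → ℝ≥0∞)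
    (hm : Measurable fun p : α × α => W p.1 p.2) {c M : ℝ≥0∞} (hct : c ≠ ⊤)
    (hk : ∫⁻ x, ∫⁻ y, W x y ∂σ ∂σ ≤ M) :
    ∫⁻ x, ∫⁻ y, c * (W x y + W y x) ∂σ ∂σ ≤ c * (2 * M) := by
  have hm2 : Measurable fun p : α × α => W p.2 p.1 := hm.comp measurable_swap
  have hm1 : ∀ x, Measurable fun y => W x y := fun x => hm.comp measurable_prodMk_left
  have hm3 : Measurable fun x => ∫⁻ y, W x y ∂σ := hm.lintegral_prod_right'
  have h1 : ∀ x, ∫⁻ y, c * (W x y + W y x) ∂σ = c * (∫⁻ y, W x y ∂σ + ∫⁻ y, W y x ∂σ) := by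
    intro x
    rw [lintegral_const_mul' _ _ hct, lintegral_add_left (hm1 x)]
  simp only [h1]
  rw [lintegral_const_mul' _ _ hct, lintegral_add_left hm3,
    lintegral_lintegral_swap (f := fun x y => W y x) hm2.aemeasurable, ← two_mul]
  exact mul_le_mul' le_rfl (mul_le_mul' le_rfl hk)

theorem ex_fin {α : Type*} [MeasurableSpace α] (σ : Measure α) [SFinite σ] (hna : ∀ x, σ {x} = 0)
    (W : α → α → ℝ≥0∞)
    (hm : Measurable fun p : α × α => W p.1 p.2) 
    (hk : ∫⁻ x, ∫⁻ y, W x y ∂σ ∂σ ≠ ⊤) : ∀ᵐ x ∂σ, ∃ y, y ≠ x ∧ W x y < ⊤ := by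
  rcases eq_zero_or_neZero σ with h0 | h0
  · simp [h0]
  have hm1 : ∀ x, Measurable fun y => W x y := fun x => hm.comp measurable_prodMk_left
  have hm3 : Measurable fun x => ∫⁻ y, W x y ∂σ := hm.lintegral_prod_right'
  filter_upwards [ae_lt_top hm3 hk] with x hx
  have h2 := ae_lt_top (hm1 x) hx.ne
  have h3 : ∀ᵐ y ∂σ, y ≠ x := by
    rw [ae_iff]; simpa using hna x
  obtain ⟨y, hy1, hy2⟩ := (h2.and h3).exists
  exact ⟨y, hy2, hy1⟩

theorem core {n : ℕ} {d : ℝ}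
    (σ : Measure (Euc n)) [SFinite σ] (hna : ∀ x, σ {x} = 0)
    {u : Euc n → ℝ} (hum : Measurable u) (E : Euc n → Euc n → ℝ≥0∞)
    (hEm : Measurable fun p : Euc n × Euc n => E p.1 p.2) (K' M : ℝ≥0∞) (hK't : K' ≠ ⊤) (hM : M ≠ ⊤)
    (hD : ∀ x y, x ≠ y → (∑' j : ℕ, dosc u x (2 * dist x y / 2 ^ j)) ^ 2 ≤ K' * E x y)
    (hk : ∫⁻ x, ∫⁻ y, ENNReal.ofReal (dist x y ^ (-(d+1))) * E x y ∂σ ∂σ ≤ M) :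
    ∃ g : Euc n → ℝ, (∀ᵐ x ∂σ, Tendsto (fun ρ => lav u x ρ (g x)) (𝓝[>] 0) (𝓝 0)) ∧
      ∫⁻ x, ∫⁻ y, ENNReal.ofReal (|g x - g y| ^ 2) / ENNReal.ofReal (dist x y ^ (d + 1)) ∂σ ∂σ ≤
      ((2 ^ n * (1 + 2 ^ n)) ^ 2 * 4 * K') * (2 * M) := by
  have hm : Measurable fun p : Euc n × Euc n => ENNReal.ofReal (dist p.1 p.2 ^ (-(d+1))) * E p.1 p.2 :=
    Measurable.mul (by fun_prop) (hEm)
  have hex : ∀ᵐ x ∂σ, ∃ t, Tendsto (fun ρ => lav u x ρ t) (𝓝[>] 0) (𝓝 0) := by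
    filter_upwards [ex_fin σ hna _ hm (ne_top_of_le_ne_top hM hk)] with x hx
    obtain ⟨y, hy2, hy1⟩ := hx
    have hd : 0 < dist x y := dist_pos.2 hy2.symm
    have hE : E x y ≠ ⊤ := by
      intro hcon
      rw [hcon, ENNReal.mul_top] at hy1
      · exact lt_irrefl _ hy1
      · rw [Ne, ENNReal.ofReal_eq_zero, not_le]; positivity
    have hS : ∑' j : ℕ, dosc u x (2 * dist x y / 2 ^ j) ≠ ⊤ := by
      intro hcon
      have := hD x y hy2.symm
      rw [hcon, ENNReal.top_pow two_ne_zero] at this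
      exact ENNReal.mul_ne_top hK't hE (top_le_iff.1 this)
    obtain ⟨t, ht, -⟩ := lav_lim hum x (by positivity) hS
    exact ⟨t, ht⟩
  classical
  obtain ⟨g, hg⟩ : ∃ g : Euc n → ℝ, ∀ᵐ x ∂σ, Tendsto (fun ρ => lav u x ρ (g x)) (𝓝[>] 0) (𝓝 0) := by
    refine ⟨fun x => if h : ∃ t, Tendsto (fun ρ => lav u x ρ t) (𝓝[>] 0) (𝓝 0) then h.choose else 0, ?_⟩
    filter_upwards [hex] with x hx
    simp only [dif_pos hx]
    exact hx.choose_spec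
  refine ⟨g, hg, ?_⟩
  set c := ((2:ℝ≥0∞) ^ n * (1 + 2 ^ n)) ^ 2 * 4 * K' with hc
  have hct : c ≠ ⊤ := by
    refine ENNReal.mul_ne_top (ENNReal.mul_ne_top (ENNReal.pow_ne_top ?_) ENNReal.ofNat_ne_top) hK't
    have : (2:ℝ≥0∞) ^ n ≠ ⊤ := ENNReal.pow_ne_top ENNReal.ofNat_ne_top
    exact ENNReal.mul_ne_top this (ENNReal.add_ne_top.2 ⟨ENNReal.one_ne_top, this⟩)
  let W : Euc n → Euc n → ℝ≥0∞ := fun x y => ENNReal.ofReal (dist x y ^ (-(d+1))) * E x y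
  have hpt : ∀ x y, Tendsto (fun ρ => lav u x ρ (g x)) (𝓝[>] 0) (𝓝 0) →
      Tendsto (fun ρ => lav u y ρ (g y)) (𝓝[>] 0) (𝓝 0) →
      ENNReal.ofReal (|g x - g y| ^ 2) / ENNReal.ofReal (dist x y ^ (d + 1)) ≤ c * (W x y + W y x) := by
    intro x y hx hy
    by_cases hxy : x = y
    · subst hxy; simp
    have hd : 0 < dist x y := dist_pos.2 hxy
    have e1 : ENNReal.ofReal (|g x - g y| ^ 2) = ‖g x - g y‖ₑ ^ 2 := by
      rw [ENNReal.ofReal_pow (abs_nonneg _), ← Real.norm_eq_abs, ofReal_norm]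
    have e2 : (ENNReal.ofReal (dist x y ^ (d + 1)))⁻¹ = ENNReal.ofReal (dist x y ^ (-(d + 1))) := by
      rw [Real.rpow_neg hd.le, ENNReal.ofReal_inv_of_pos (by positivity)]
    have e3 : ‖g x - g y‖ₑ ^ 2 ≤ c * (E x y + E y x) := by
      have hb := hD y x (Ne.symm hxy)
      rw [dist_comm y x] at hb
      exact e3_aux (lav_pair hum hxy hx hy) (hD x y hxy) hb
    rw [div_eq_mul_inv, e1, e2]
    calc _ ≤ c * (E x y + E y x) * ENNReal.ofReal (dist x y ^ (-(d + 1))) := mul_le_mul' e3 le_rfl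
      _ = _ := by simp only [W, dist_comm y x]; ring
  calc _ ≤ ∫⁻ x, ∫⁻ y, c * (W x y + W y x) ∂σ ∂σ := by
        apply lintegral_mono_ae
        filter_upwards [hg] with x hx
        apply lintegral_mono_ae
        filter_upwards [hg] with y hy
        exact hpt x y hx hy
    _ ≤ _ := int_sym σ W hm hct hk

/-- the trace theorem. -/
theorem statement5 (n : ℕ) (hn : 2 ≤ n) (d C₀ : ℝ) (hd0 : 0 < d)
    (hdn : d < (n : ℝ) - 1) (hC₀ : 1 ≤ C₀) :
    ∃ C : ℝ, 0 < C ∧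
      ∀ Γ : Set (Euc n), Γ.Nonempty → IsClosed Γ → AhlforsRegular n d C₀ Γ →
        ∀ u v, MemW n d Γ u v → LocallyIntegrable u volume →
          ∃ g : Euc n → ℝ,
            (∀ᵐ x ∂(μH[d].restrict Γ), HasTraceAt u x (g x)) ∧
            (∀ᵐ x ∂(μH[d].restrict Γ),
              Tendsto (fun ρ : ℝ => ⨍ y in ball x ρ, |u y - g x|) (𝓝[>] (0 : ℝ)) (𝓝 0)) ∧
            ∫⁻ x in Γ, ∫⁻ y in Γ,
                ENNReal.ofReal (|g x - g y| ^ 2) / ENNReal.ofReal (dist x y ^ (d + 1))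
                  ∂(μH[d]) ∂(μH[d])
              ≤ ENNReal.ofReal C * ∫⁻ x in Γᶜ, ENNReal.ofReal (‖v x‖ ^ 2) ∂(measW n d Γ) := by
  set K' : ℝ≥0∞ := 3 * (ENNReal.ofReal (4 * 20 ^ n) / volume (ball (0 : Euc n) 1)) with hK'
  set A : ℝ := C₀ * 2 ^ d with hA
  set K : ℝ≥0∞ := 4 * ENNReal.ofReal ((A * 2 ^ d / (1 - 2 ^ (d - ((n:ℝ) - 1 + d))) * (2 ^ (2 - (n:ℝ)) * 10 ^ ((n:ℝ) - 1))) *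
      (A * 2 ^ d / (1 - 2 ^ (d - ((n:ℝ) - 1))))) with hK
  have hKt : K ≠ ⊤ := ENNReal.mul_ne_top ENNReal.ofNat_ne_top ENNReal.ofReal_ne_top
  have hK't : K' ≠ ⊤ := ENNReal.mul_ne_top ENNReal.ofNat_ne_top
    (ENNReal.div_ne_top ENNReal.ofReal_ne_top (measure_ball_pos _ _ one_pos).ne')
  set Q : ℝ≥0∞ := ((2 ^ n * (1 + 2 ^ n)) ^ 2 * 4 * K') * (2 * K) with hQ
  have h2n : (2 : ℝ≥0∞) ^ n ≠ ⊤ := ENNReal.pow_ne_top ENNReal.ofNat_ne_top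
  have hQt : Q ≠ ⊤ := by
    refine ENNReal.mul_ne_top (ENNReal.mul_ne_top (ENNReal.mul_ne_top (ENNReal.pow_ne_top ?_)
      ENNReal.ofNat_ne_top) hK't) (ENNReal.mul_ne_top ENNReal.ofNat_ne_top hKt)
    exact ENNReal.mul_ne_top h2n (ENNReal.add_ne_top.2 ⟨ENNReal.one_ne_top, h2n⟩)
  refine ⟨Q.toReal + 1, by positivity, ?_⟩
  intro Γ hne hcl hΓ u v hW hu
  have hQle : Q ≤ ENNReal.ofReal (Q.toReal + 1) := by
    rw [← ENNReal.ofReal_toReal hQt]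
    apply ENNReal.ofReal_le_ofReal
    rw [ENNReal.toReal_ofReal ENNReal.toReal_nonneg]; linarith
  have hC0 : 0 ≤ C₀ := by linarith
  have := sigma_locfin hC0 hΓ
  have hsig : SFinite (μH[d].restrict Γ : Measure (Euc n)) := inferInstance
  -- measurable representatives
  obtain ⟨u', hum', huu⟩ := hu.aestronglyMeasurable
  have hum : Measurable u' := hum'.measurable
  have hu' : LocallyIntegrable u' volume := hu.congr huu
  have hg' : IsDistribGradOn u' v Γᶜ := by
    intro φ h1 h2 h3
    rw [← hW.isGrad φ h1 h2 h3]
    apply integral_congr_ae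
    filter_upwards [ae_restrict_of_ae huu] with x hx
    rw [hx]
  obtain ⟨v', hvm, hvv⟩ := hW.gradLocInt.aestronglyMeasurable
  set F : Euc n → ℝ≥0∞ := Γᶜ.indicator (fun y => ‖v' y‖ₑ) with hFd
  have hF : Measurable F := (hvm.measurable.enorm).indicator hcl.measurableSet.compl
  have hF0 : ∀ z ∈ Γ, F z = 0 := fun z hz => indicator_of_notMem (by simpa using hz) _
  have hFv : ∀ᵐ y ∂(volume.restrict Γᶜ), ‖v y‖ₑ = F y := by
    filter_upwards [hvv, ae_restrict_mem hcl.measurableSet.compl] with y hy hy2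
    rw [hFd, indicator_of_mem hy2, hy]
  have hT := transl_est hC₀ hne hdn hcl hΓ hg' hu' hF hFv
  have hN : ∫⁻ z, F z ^ 2 * ENNReal.ofReal (infDist z Γ ^ (d + 1 - (n:ℝ))) =
      ∫⁻ x in Γᶜ, ENNReal.ofReal (‖v x‖ ^ 2) ∂(measW n d Γ) := by
    have hwm : Measurable fun x => ENNReal.ofReal (weightW n d Γ x) := by
      unfold weightW; fun_prop
    rw [measW, setLIntegral_withDensity_eq_setLIntegral_mul_non_measurable _ hwm _ hcl.measurableSet.compl
      (Eventually.of_forall fun _ => ENNReal.ofReal_lt_top)]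
    calc _ = ∫⁻ z in Γᶜ, F z ^ 2 * ENNReal.ofReal (infDist z Γ ^ (d + 1 - (n:ℝ))) := by
          rw [← lintegral_indicator hcl.measurableSet.compl]
          congr 1; ext z
          by_cases hz : z ∈ Γ
          · rw [indicator_of_notMem (by simpa using hz), hF0 z hz]; simp
          · rw [indicator_of_mem (by simpa using hz)]
      _ = _ := by
          apply lintegral_congr_ae
          filter_upwards [hFv] with z hz
          rw [Pi.mul_apply, ← hz, weightW, ENNReal.ofReal_pow (norm_nonneg _), ofReal_norm, mul_comm]
  have hNt : ∫⁻ z, F z ^ 2 * ENNReal.ofReal (infDist z Γ ^ (d + 1 - (n:ℝ))) ≠ ⊤ := by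
    rw [hN]; exact hW.l2.ne
  have hna : ∀ x, (μH[d].restrict Γ : Measure (Euc n)) {x} = 0 := by
    intro x
    have := Measure.nullSingletonClass_hausdorff (Euc n) hd0
    exact measure_singleton x
  have hA0 : 0 ≤ A := by positivity
  have hk := key_sum hn hd0 hdn hA0 hne hcl (μH[d].restrict Γ) (upper_reg hC0 hΓ)
    (ae_restrict_mem hcl.measurableSet) hF hF0
  rw [← hK] at hk
  obtain ⟨g, hg1, hg2⟩ := core (d := d) (μH[d].restrict Γ) hna hum (enE F) (enE_meas hF) K' _ hK't
    (ENNReal.mul_ne_top hKt hNt) (fun x y hxy => dosc_enE hum hF hT hxy) hk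
  refine ⟨g, ?_, ?_, ?_⟩
  · filter_upwards [hg1] with x hx
    have := lav_trace hum hu' x hx
    unfold HasTraceAt at this ⊢
    refine this.congr fun ρ => ?_
    rw [setAverage_eq, setAverage_eq]
    congr 1
    apply integral_congr_ae
    filter_upwards [ae_restrict_of_ae huu] with y hy
    rw [hy]
  · filter_upwards [hg1] with x hx
    refine (lav_real hum x hx).congr fun ρ => ?_
    rw [setAverage_eq, setAverage_eq]
    congr 1
    apply integral_congr_ae
    filter_upwards [ae_restrict_of_ae huu] with y hy
    rw [hy]
  · refine hg2.trans ?_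
    rw [← hN]
    refine le_trans (le_of_eq ?_) (mul_le_mul' hQle le_rfl)
    rw [hQ]; ring
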